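/- Let t ≥ 2 be an integer and let c = (c_i)_{i≥1} be a cost vector of nonnegative reals with c_i ≥ 1 and c_{i+1} - c_i ≤ c_t for all i ≥ t. For every ρ > 0 there exists n₀ such that for every n > n₀ and every simple graph G on n vertices, π_t(G, c) ≤ π*_t(G, c) + ρ·n^t. -/

import Mathlib

open scoped Classical
open Finset

/-- `K` is a clique of `G`: a nonempty set of pairwise adjacent vertices. -/
def IsCliqueOf {V : Type} [Fintype V] [DecidableEq V] (G : SimpleGraph V) (K : Finset V) : Prop :=
  K.Nonempty ∧ G.IsClique (K : Set V)

/-- Total `c`-cost of a weighting `f` of the finsets of vertices. -/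
noncomputable def cliqueCost {V : Type} [Fintype V] [DecidableEq V]
    (c : ℕ → ℝ) (f : Finset V → ℝ) : ℝ :=
  ∑ K : Finset V, c K.card * f K

/-- `f` is a fractional `t`-clique cover of `G`. -/
def IsFracCover {V : Type} [Fintype V] [DecidableEq V]
    (t : ℕ) (G : SimpleGraph V) (f : Finset V → ℝ) : Prop :=
  (∀ K, 0 ≤ f K) ∧ (∀ K, ¬ IsCliqueOf G K → f K = 0) ∧
  ∀ T : Finset V, T.card = t → G.IsClique (T : Set V) →
    1 ≤ ∑ K ∈ Finset.univ.filter (fun K => T ⊆ K), f K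

/-- `f` is a fractional `t`-clique decomposition of `G`. -/
def IsFracDecomp {V : Type} [Fintype V] [DecidableEq V]
    (t : ℕ) (G : SimpleGraph V) (f : Finset V → ℝ) : Prop :=
  (∀ K, 0 ≤ f K) ∧ (∀ K, ¬ IsCliqueOf G K → f K = 0) ∧
  ∀ T : Finset V, T.card = t → G.IsClique (T : Set V) →
    ∑ K ∈ Finset.univ.filter (fun K => T ⊆ K), f K = 1

/-- `f` is an integer (`{0,1}`-valued) `t`-clique cover of `G`. -/
def IsIntCover {V : Type} [Fintype V] [DecidableEq V]
    (t : ℕ) (G : SimpleGraph V) (f : Finset V → ℝ) : Prop :=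
  IsFracCover t G f ∧ ∀ K, f K = 0 ∨ f K = 1

/-- `f` is an integer (`{0,1}`-valued) `t`-clique decomposition of `G`. -/
def IsIntDecomp {V : Type} [Fintype V] [DecidableEq V]
    (t : ℕ) (G : SimpleGraph V) (f : Finset V → ℝ) : Prop :=
  IsFracDecomp t G f ∧ ∀ K, f K = 0 ∨ f K = 1

/-- θ*_t(G,c): minimum total c-cost of a fractional t-clique cover. -/
noncomputable def thetaFrac {V : Type} [Fintype V] [DecidableEq V]
    (t : ℕ) (G : SimpleGraph V) (c : ℕ → ℝ) : ℝ :=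
  sInf { x | ∃ f, IsFracCover t G f ∧ x = cliqueCost c f }

/-- θ_t(G,c): minimum total c-cost of an integer t-clique cover. -/
noncomputable def thetaInt {V : Type} [Fintype V] [DecidableEq V]
    (t : ℕ) (G : SimpleGraph V) (c : ℕ → ℝ) : ℝ :=
  sInf { x | ∃ f, IsIntCover t G f ∧ x = cliqueCost c f }

/-- π*_t(G,c): minimum total c-cost of a fractional t-clique decomposition. -/
noncomputable def piFrac {V : Type} [Fintype V] [DecidableEq V]
    (t : ℕ) (G : SimpleGraph V) (c : ℕ → ℝ) : ℝ :=
  sInf { x | ∃ f, IsFracDecomp t G f ∧ x = cliqueCost c f }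

/-- π_t(G,c): minimum total c-cost of an integer t-clique decomposition. -/
noncomputable def piInt {V : Type} [Fintype V] [DecidableEq V]
    (t : ℕ) (G : SimpleGraph V) (c : ℕ → ℝ) : ℝ :=
  sInf { x | ∃ f, IsIntDecomp t G f ∧ x = cliqueCost c f }

/-- `G` is complete multipartite: vertices can be assigned to parts so that
adjacency holds exactly between distinct parts. -/
def IsCompleteMultipartite {V : Type} [Fintype V] [DecidableEq V]
    (G : SimpleGraph V) : Prop :=
  ∃ p : V → ℕ, ∀ u v, G.Adj u v ↔ p u ≠ p v

/-!
A fractional decomposition is turned into an integer one in three steps, each costing at most a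
small multiple of `n ^ t`.

*Truncation.* Every clique on more than `s` vertices is replaced by the uniform distribution on its
`s`-subsets. This charges `c_s / C(s, t)` to each `t`-clique, which is small for large `s`: by the
step condition `c_s` grows linearly in `s`, whereas `C(s, t)` grows at least quadratically.

*Spreading.* By Szemerédi's regularity lemma the vertices split into boundedly many classes such
that few `t`-sets use a pair of vertices in one class, or in an irregular or sparse pair of classes.
After discarding the cliques containing such a pair, the total weight of the cliques with a given
set of colours is spread uniformly over all cliques with these colours. By the counting lemma there
are about as many of them as predicted by the densities, so the load of a `t`-set is on average at
most about `1`, while the weight above every `(t + 1)`-set tends to `0`.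

*Rounding.* View `t`-sets as vertices and cliques as edges of a hypergraph. The spread weighting is
a fractional matching of small codegree, so by Pippenger's nibble some integer matching has almost
the same weight, for any bounded weights of the edges. Weight a `k`-clique by the amount
`C(k, t) c_t - c_k` that it saves over the single `t`-cliques inside it, and complete the matching
by the `t`-cliques that it leaves uncovered.
-/

/-! ### The nibble -/

section PoissonSubset

variable {κ : Type*} [Fintype κ] [DecidableEq κ] {μ : κ → ℝ}

/-- The probability that a random subset of `κ` equals `C`, when each `k` is omitted independently
with probability `exp (-μ k)`. -/
noncomputable def poissonWeight (μ : κ → ℝ) (C : Finset κ) : ℝ :=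
  (∏ k ∈ C, (1 - Real.exp (-μ k))) * ∏ k ∈ Cᶜ, Real.exp (-μ k)

/-- The expectation of `f` over the random subset with distribution `poissonWeight μ`. -/
noncomputable def poissonMean (μ : κ → ℝ) (f : Finset κ → ℝ) : ℝ :=
  ∑ C, poissonWeight μ C * f C

/-- The indicator function of the event that the random subset `C` misses `S`. -/
noncomputable def missIndicator (S C : Finset κ) : ℝ :=
  if Disjoint C S then 1 else 0

omit [Fintype κ] in
lemma missIndicator_nonneg (S C : Finset κ) : 0 ≤ missIndicator S C := by
  rw [missIndicator]; split_ifs <;> norm_num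

omit [Fintype κ] in
lemma missIndicator_le_one (S C : Finset κ) : missIndicator S C ≤ 1 := by
  rw [missIndicator]; split_ifs <;> norm_num

omit [Fintype κ] in
lemma missIndicator_union (S T C : Finset κ) :
    missIndicator (S ∪ T) C = missIndicator S C * missIndicator T C := by
  simp only [missIndicator, disjoint_union_right, ite_and, ite_mul, one_mul, zero_mul]

omit [Fintype κ] in
lemma prod_mul_missIndicator (f : κ → ℝ) (S C : Finset κ) :
    (∏ k ∈ C, f k) * missIndicator S C = ∏ k ∈ C, if k ∈ S then 0 else f k := by
  by_cases h : Disjoint C S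
  · rw [missIndicator, if_pos h, mul_one]
    exact prod_congr rfl fun k hk => (if_neg (disjoint_left.1 h hk)).symm
  · obtain ⟨k, hk, hkS⟩ := not_disjoint_iff.1 h
    rw [missIndicator, if_neg h, mul_zero]
    exact (prod_eq_zero (M₀ := ℝ) hk (if_pos hkS)).symm

lemma poissonWeight_nonneg (hμ : ∀ k, 0 ≤ μ k) (C : Finset κ) : 0 ≤ poissonWeight μ C :=
  mul_nonneg (prod_nonneg fun k _ => sub_nonneg.2 (Real.exp_le_one_iff.2 (neg_nonpos.2 (hμ k))))
    (prod_nonneg fun _ _ => (Real.exp_pos _).le)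

lemma poissonMean_missIndicator (μ : κ → ℝ) (S : Finset κ) :
    poissonMean μ (missIndicator S) = Real.exp (-∑ k ∈ S, μ k) := by
  calc poissonMean μ (missIndicator S)
      = ∑ C ∈ univ.powerset, (∏ k ∈ C, if k ∈ S then 0 else 1 - Real.exp (-μ k)) *
          ∏ k ∈ univ \ C, Real.exp (-μ k) := by
        rw [powerset_univ, poissonMean]
        refine sum_congr rfl fun C _ => ?_
        rw [poissonWeight, mul_right_comm, prod_mul_missIndicator, compl_eq_univ_sdiff]
    _ = ∏ k, ((if k ∈ S then 0 else 1 - Real.exp (-μ k)) + Real.exp (-μ k)) :=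
        (prod_add _ _ _).symm
    _ = ∏ k, if k ∈ S then Real.exp (-μ k) else 1 :=
        prod_congr rfl fun k _ => by split_ifs <;> ring
    _ = Real.exp (-∑ k ∈ S, μ k) := by
        rw [Fintype.prod_ite_mem, ← sum_neg_distrib, Real.exp_sum]

lemma sum_poissonWeight (μ : κ → ℝ) : ∑ C, poissonWeight μ C = 1 := by
  simpa [poissonMean, missIndicator] using poissonMean_missIndicator μ ∅

lemma poissonMean_const_mul (μ : κ → ℝ) (a : ℝ) (f : Finset κ → ℝ) :
    poissonMean μ (fun C => a * f C) = a * poissonMean μ f := by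
  simp only [poissonMean, mul_sum, mul_left_comm]

lemma poissonMean_add (μ : κ → ℝ) (f g : Finset κ → ℝ) :
    poissonMean μ (fun C => f C + g C) = poissonMean μ f + poissonMean μ g := by
  simp only [poissonMean, mul_add, sum_add_distrib]

lemma poissonMean_sub (μ : κ → ℝ) (f g : Finset κ → ℝ) :
    poissonMean μ (fun C => f C - g C) = poissonMean μ f - poissonMean μ g := by
  simp only [poissonMean, mul_sub, sum_sub_distrib]

lemma poissonMean_sum {ι : Type*} (μ : κ → ℝ) (s : Finset ι) (f : ι → Finset κ → ℝ) :
    poissonMean μ (fun C => ∑ i ∈ s, f i C) = ∑ i ∈ s, poissonMean μ (f i) := by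
  simp only [poissonMean, mul_sum]
  exact sum_comm

lemma poissonMean_const (μ : κ → ℝ) (a : ℝ) : poissonMean μ (fun _ => a) = a := by
  rw [poissonMean, ← sum_mul, sum_poissonWeight, one_mul]

lemma poissonMean_mono (hμ : ∀ k, 0 ≤ μ k) {f g : Finset κ → ℝ} (hfg : ∀ C, f C ≤ g C) :
    poissonMean μ f ≤ poissonMean μ g :=
  sum_le_sum fun C _ => mul_le_mul_of_nonneg_left (hfg C) (poissonWeight_nonneg hμ C)

lemma exists_poissonMean_le (hμ : ∀ k, 0 ≤ μ k) (f : Finset κ → ℝ) :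
    ∃ C, poissonMean μ f ≤ f C := by
  by_contra! h
  have hle : ∀ C ∈ univ, poissonWeight μ C * f C ≤ poissonWeight μ C * poissonMean μ f :=
    fun C _ => mul_le_mul_of_nonneg_left (h C).le (poissonWeight_nonneg hμ C)
  obtain ⟨C, -, hC⟩ := exists_ne_zero_of_sum_ne_zero (s := univ) (f := poissonWeight μ)
    (by rw [sum_poissonWeight]; exact one_ne_zero)
  refine (sum_lt_sum hle ⟨C, mem_univ C, ?_⟩).ne (poissonMean_const μ (poissonMean μ f)).symm
  exact mul_lt_mul_of_pos_left (h C) ((poissonWeight_nonneg hμ C).lt_of_ne' hC)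

lemma poissonMean_mem_mul_missIndicator (μ : κ → ℝ) {S : Finset κ} {k : κ} (hk : k ∉ S) :
    poissonMean μ (fun C => if k ∈ C ∧ Disjoint C S then 1 else 0) =
      (1 - Real.exp (-μ k)) * Real.exp (-∑ l ∈ S, μ l) := by
  have hsplit : ∀ C : Finset κ, (if k ∈ C ∧ Disjoint C S then (1 : ℝ) else 0) =
      missIndicator S C - missIndicator (insert k S) C := by
    intro C
    by_cases h : k ∈ C <;> by_cases h' : Disjoint C S <;>
      simp [missIndicator, h, h', disjoint_insert_right]
  simp only [hsplit, poissonMean_sub, poissonMean_missIndicator, sum_insert hk, neg_add,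
    Real.exp_add]
  ring

end PoissonSubset

section Load

variable {ι α : Type*} [Fintype ι] [DecidableEq α] {e : ι → Finset α} {F : ι → ℝ}

/-- The total weight of the edges of the hypergraph `e` through the vertex `x`. -/
def vertexLoad (e : ι → Finset α) (F : ι → ℝ) (x : α) : ℝ :=
  ∑ i with x ∈ e i, F i

/-- The total weight of the edges of the hypergraph `e` through both `x` and `y`. -/
def codegree (e : ι → Finset α) (F : ι → ℝ) (x y : α) : ℝ :=
  ∑ i with x ∈ e i ∧ y ∈ e i, F i

lemma vertexLoad_nonneg (hF : ∀ i, 0 ≤ F i) (x : α) : 0 ≤ vertexLoad e F x :=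
  sum_nonneg fun i _ => hF i

lemma vertexLoad_mono {F' : ι → ℝ} (hF : ∀ i, F' i ≤ F i) (x : α) :
    vertexLoad e F' x ≤ vertexLoad e F x :=
  sum_le_sum fun i _ => hF i

lemma sum_vertexLoad_mul (e : ι → Finset α) (F : ι → ℝ) (Y : Finset α) (b : α → ℝ) :
    ∑ x ∈ Y, vertexLoad e F x * b x = ∑ i, F i * ∑ x ∈ e i ∩ Y, b x := by
  simp only [vertexLoad, sum_mul, mul_sum]
  refine sum_comm' fun x i => ?_
  simp [and_comm]

lemma sum_vertexLoad (e : ι → Finset α) (F : ι → ℝ) (Y : Finset α) :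
    ∑ x ∈ Y, vertexLoad e F x = ∑ i, F i * #(e i ∩ Y) := by
  simpa using sum_vertexLoad_mul e F Y fun _ => 1

lemma sum_codegree (e : ι → Finset α) (F : ι → ℝ) (x : α) (Y : Finset α) :
    ∑ y ∈ Y, codegree e F x y = ∑ i with x ∈ e i, F i * #(e i ∩ Y) := by
  calc ∑ y ∈ Y, codegree e F x y = ∑ i with x ∈ e i, ∑ _y ∈ e i ∩ Y, F i := by
        refine sum_comm' fun y i => ?_
        simp only [mem_filter, mem_univ, true_and, mem_inter]
        tauto
    _ = _ := by simp [mul_comm]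

lemma sum_offDiag_codegree (e : ι → Finset α) (F : ι → ℝ) (Y : Finset α) :
    ∑ p ∈ Y.offDiag, codegree e F p.1 p.2 = ∑ i, F i * #(e i ∩ Y).offDiag := by
  calc ∑ p ∈ Y.offDiag, codegree e F p.1 p.2 = ∑ i, ∑ _p ∈ (e i ∩ Y).offDiag, F i := by
        refine sum_comm' fun p i => ?_
        simp only [mem_offDiag, mem_filter, mem_univ, true_and, mem_inter]
        tauto
    _ = _ := by simp only [sum_const, nsmul_eq_mul, mul_comm]

/-- The fraction of the load `l` of a vertex that exceeds its capacity `1`. -/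
noncomputable def excessRatio (l : ℝ) : ℝ := max (l - 1) 0 / max l 1

lemma excessRatio_nonneg (l : ℝ) : 0 ≤ excessRatio l := by
  rw [excessRatio]; positivity

lemma mul_excessRatio_le (l : ℝ) : l * excessRatio l ≤ max (l - 1) 0 := by
  rw [excessRatio, mul_div_assoc', div_le_iff₀ (by positivity), mul_comm]
  exact mul_le_mul_of_nonneg_left (le_max_left _ _) (le_max_right _ _)

lemma one_sub_excessRatio {l : ℝ} (hl : 1 ≤ l) : 1 - excessRatio l = l⁻¹ := by
  rw [excessRatio, max_eq_left (sub_nonneg.2 hl), max_eq_left hl]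
  field_simp
  ring

lemma exists_le_vertexLoad_le_one [Fintype α] (e : ι → Finset α) (hF : ∀ i, 0 ≤ F i) :
    ∃ F' : ι → ℝ, (∀ i, 0 ≤ F' i) ∧ (∀ i, F' i ≤ F i) ∧ (∀ x, vertexLoad e F' x ≤ 1) ∧
      ∑ i, (F i - F' i) ≤ ∑ x, max (vertexLoad e F x - 1) 0 := by
  set a : ι → ℝ := fun i => ∑ x ∈ e i, excessRatio (vertexLoad e F x) with ha
  have ha0 : ∀ i, 0 ≤ a i := fun i => sum_nonneg fun x _ => excessRatio_nonneg _
  have hle : ∀ i, F i * max (1 - a i) 0 ≤ F i := fun i =>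
    mul_le_of_le_one_right (hF i) (max_le (by linarith [ha0 i]) zero_le_one)
  refine ⟨fun i => F i * max (1 - a i) 0, fun i => mul_nonneg (hF i) (le_max_right _ _), hle,
    fun x => ?_, ?_⟩
  · rcases le_total (vertexLoad e F x) 1 with hx | hx
    · exact (vertexLoad_mono hle x).trans hx
    have hscale : ∀ i, x ∈ e i → max (1 - a i) 0 ≤ (vertexLoad e F x)⁻¹ := by
      intro i hi
      have : excessRatio (vertexLoad e F x) ≤ a i :=
        single_le_sum (f := fun y => excessRatio (vertexLoad e F y))
          (fun y _ => excessRatio_nonneg _) hi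
      rw [← one_sub_excessRatio hx]
      refine max_le (by linarith) ?_
      rw [one_sub_excessRatio hx]
      positivity
    calc ∑ i with x ∈ e i, F i * max (1 - a i) 0
        ≤ ∑ i with x ∈ e i, F i * (vertexLoad e F x)⁻¹ := sum_le_sum fun i hi =>
          mul_le_mul_of_nonneg_left (hscale i (mem_filter.1 hi).2) (hF i)
      _ = vertexLoad e F x * (vertexLoad e F x)⁻¹ := by rw [← sum_mul, vertexLoad]
      _ = 1 := mul_inv_cancel₀ (by linarith)
  · calc ∑ i, (F i - F i * max (1 - a i) 0) ≤ ∑ i, F i * a i := by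
          refine sum_le_sum fun i _ => ?_
          linarith [mul_le_mul_of_nonneg_left (le_max_left (1 - a i) 0) (hF i)]
      _ = ∑ x, vertexLoad e F x * excessRatio (vertexLoad e F x) := by
          rw [sum_vertexLoad_mul]
          simp only [inter_univ, ha]
      _ ≤ _ := sum_le_sum fun x _ => mul_excessRatio_le _

end Load

lemma sum_mul_sub_sum_sub_le {ι : Type*} [Fintype ι] {a b w : ι → ℝ} (hba : ∀ i, b i ≤ a i)
    (hw : ∀ i, w i ≤ 1) : ∑ i, a i * w i - ∑ i, (a i - b i) ≤ ∑ i, b i * w i := by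
  rw [← sum_sub_distrib]
  exact sum_le_sum fun i _ => by nlinarith [hba i, hw i]

section HitWeight

variable {ι α : Type*} [Fintype ι] [DecidableEq α] {e : ι → Finset α} {F : ι → ℝ}

/-- A fractional matching of the hypergraph `e`, all of whose edges are nonempty with at most `r`
vertices, in which any two vertices have weighted codegree at most `δ`. -/
structure IsSparseFracMatching (r : ℕ) (δ : ℝ) (e : ι → Finset α) (F : ι → ℝ) : Prop where
  nonneg : ∀ i, 0 ≤ F i
  nonempty : ∀ i, (e i).Nonempty
  card_le : ∀ i, #(e i) ≤ r
  load_le_one : ∀ x, vertexLoad e F x ≤ 1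
  codegree_le : ∀ x y, x ≠ y → codegree e F x y ≤ δ

namespace IsSparseFracMatching

variable {r : ℕ} {δ : ℝ}

lemma le_one (h : IsSparseFracMatching r δ e F) (i : ι) : F i ≤ 1 := by
  obtain ⟨x, hx⟩ := h.nonempty i
  exact (single_le_sum (fun j _ => h.nonneg j) (mem_filter.2 ⟨mem_univ i, hx⟩)).trans
    (h.load_le_one x)

lemma sum_mul_le_card [Fintype α] (h : IsSparseFracMatching r δ e F) {w : ι → ℝ}
    (hw : ∀ i, w i ≤ 1) : ∑ i, F i * w i ≤ Fintype.card α := by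
  calc ∑ i, F i * w i ≤ ∑ i, F i * #(e i ∩ univ) := by
        refine sum_le_sum fun i _ => mul_le_mul_of_nonneg_left ((hw i).trans ?_) (h.nonneg i)
        rw [inter_univ]
        exact_mod_cast (h.nonempty i).card_pos
    _ = ∑ x, vertexLoad e F x := (sum_vertexLoad e F univ).symm
    _ ≤ ∑ _x : α, (1 : ℝ) := sum_le_sum fun x _ => h.load_le_one x
    _ = Fintype.card α := by simp

end IsSparseFracMatching

/-- The weight of the edges meeting `Y`, plus the missing load of the vertices of `Y`. It counts
the weight of an edge once where `#Y` counts it `#(e i ∩ Y)` times. -/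
noncomputable def hitWeight (e : ι → Finset α) (F : ι → ℝ) (Y : Finset α) : ℝ :=
  (∑ i with ¬Disjoint (e i) Y, F i) + ∑ x ∈ Y, (1 - vertexLoad e F x)

lemma hitWeight_eq_card_sub (e : ι → Finset α) (F : ι → ℝ) (Y : Finset α) :
    hitWeight e F Y = #Y - ∑ i with ¬Disjoint (e i) Y, F i * (#(e i ∩ Y) - 1) := by
  have hload : ∑ x ∈ Y, vertexLoad e F x = ∑ i with ¬Disjoint (e i) Y, F i * #(e i ∩ Y) := by
    rw [sum_vertexLoad]
    refine (sum_filter_of_ne (p := fun i => ¬Disjoint (e i) Y) fun i _ hi hd => hi ?_).symm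
    simp [disjoint_iff_inter_eq_empty.1 hd]
  simp only [hitWeight, sum_sub_distrib, hload, mul_sub, sum_const, nsmul_eq_mul, mul_one]
  ring

lemma hitWeight_singleton (e : ι → Finset α) (F : ι → ℝ) (x : α) : hitWeight e F {x} = 1 := by
  simp [hitWeight, vertexLoad]

lemma one_le_card_inter {A B : Finset α} (h : ¬Disjoint A B) : (1 : ℝ) ≤ #(A ∩ B) := by
  exact_mod_cast (not_disjoint_iff_nonempty_inter.1 h).card_pos

lemma hitWeight_le (hF : ∀ i, 0 ≤ F i) (Y : Finset α) : hitWeight e F Y ≤ #Y := by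
  rw [hitWeight_eq_card_sub]
  refine sub_le_self _ (sum_nonneg fun i hi => mul_nonneg (hF i) (sub_nonneg.2 ?_))
  exact one_le_card_inter (mem_filter.1 hi).2

lemma IsSparseFracMatching.le_hitWeight {r : ℕ} {δ : ℝ} (h : IsSparseFracMatching r δ e F)
    (hδ : 0 ≤ δ) (Y : Finset α) : #Y - (#Y : ℝ) ^ 2 * δ ≤ hitWeight e F Y := by
  have hpairs : ∑ p ∈ Y.offDiag, codegree e F p.1 p.2 ≤ (#Y : ℝ) ^ 2 * δ := by
    calc _ ≤ ∑ _p ∈ Y.offDiag, δ :=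
          sum_le_sum fun p hp => h.codegree_le _ _ (mem_offDiag.1 hp).2.2
      _ = (#Y.offDiag : ℝ) * δ := by rw [sum_const, nsmul_eq_mul]
      _ ≤ _ := by
        refine mul_le_mul_of_nonneg_right ?_ hδ
        rw [offDiag_card, ← sq]
        exact_mod_cast Nat.sub_le _ _
  have hexcess : ∑ i with ¬Disjoint (e i) Y, F i * (#(e i ∩ Y) - 1) ≤
      ∑ i, F i * #(e i ∩ Y).offDiag := by
    refine (sum_le_sum fun i hi => mul_le_mul_of_nonneg_left ?_ (h.nonneg i)).trans
      (sum_le_univ_sum_of_nonneg fun i => mul_nonneg (h.nonneg i) (Nat.cast_nonneg _))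
    have hone := one_le_card_inter (mem_filter.1 hi).2
    rw [offDiag_card, Nat.cast_sub (Nat.le_mul_self _), Nat.cast_mul]
    nlinarith
  rw [hitWeight_eq_card_sub]
  rw [sum_offDiag_codegree] at hpairs
  linarith

end HitWeight

section Nibble

variable {ι α : Type*} [Fintype ι] [DecidableEq ι] [DecidableEq α]
  {e : ι → Finset α} {F w : ι → ℝ} {r : ℕ} {δ η : ℝ}

/-- The rates of the random selection in one round of the nibble: an edge is selected at rate
proportional to its weight, a vertex is deleted at rate proportional to its missing load, so that
all vertices survive with the same probability. -/
noncomputable def nibbleRate (e : ι → Finset α) (F : ι → ℝ) (η : ℝ) : ι ⊕ α → ℝ :=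
  Sum.elim (fun i => η * F i) fun x => η * (1 - vertexLoad e F x)

/-- The selections which destroy a vertex of `Y`: the edges meeting `Y` and the vertices of `Y`. -/
noncomputable def touching (e : ι → Finset α) (Y : Finset α) : Finset (ι ⊕ α) :=
  ({i | ¬Disjoint (e i) Y} : Finset ι).disjSum Y

/-- The selected edges that no other selection touches. -/
noncomputable def nibbleMatching (e : ι → Finset α) (F : ι → ℝ) (C : Finset (ι ⊕ α)) : Finset ι :=
  {i | F i ≠ 0 ∧ Sum.inl i ∈ C ∧ Disjoint C ((touching e (e i)).erase (Sum.inl i))}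

/-- The weighting of the surviving edges for the next round, rescaled to compensate for the
survival of the other vertices of the edge given that one vertex survives. -/
noncomputable def nibbleResidue (e : ι → Finset α) (F : ι → ℝ) (η : ℝ) (C : Finset (ι ⊕ α))
    (i : ι) : ℝ :=
  F i * Real.exp (η * (#(e i) - 1)) * missIndicator (touching e (e i)) C

/-- The bound on the second moment of the load deviation after one round of the nibble. -/
noncomputable def nibbleVariance (r : ℕ) (δ η : ℝ) : ℝ :=
  Real.exp (4 * r ^ 2 * δ * η) - 1 + Real.exp (2 * r * η) * (r * δ)

omit [DecidableEq ι] in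
lemma inl_mem_touching {i : ι} {Y : Finset α} :
    (Sum.inl i : ι ⊕ α) ∈ touching e Y ↔ ¬Disjoint (e i) Y := by
  simp [touching]

lemma touching_union (e : ι → Finset α) (Y Z : Finset α) :
    touching e (Y ∪ Z) = touching e Y ∪ touching e Z := by
  ext (i | x)
  · simp only [inl_mem_touching, mem_union, disjoint_union_right]
    tauto
  · simp [touching]

omit [DecidableEq ι] in
lemma touching_mono {Y Z : Finset α} (h : Y ⊆ Z) : touching e Y ⊆ touching e Z :=
  disjSum_mono (monotone_filter_right _ fun _ _ hi hd => hi (disjoint_of_subset_right h hd)) h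

omit [DecidableEq ι] in
lemma sum_nibbleRate_touching (e : ι → Finset α) (F : ι → ℝ) (η : ℝ) (Y : Finset α) :
    ∑ k ∈ touching e Y, nibbleRate e F η k = η * hitWeight e F Y := by
  simp only [touching, sum_disjSum, nibbleRate, Sum.elim_inl, Sum.elim_inr, hitWeight, mul_add,
    mul_sum]

lemma nibbleMatching_pairwiseDisjoint (e : ι → Finset α) (F : ι → ℝ) (C : Finset (ι ⊕ α)) :
    (nibbleMatching e F C : Set ι).PairwiseDisjoint e := by
  intro i hi j hj hij
  by_contra hd
  simp only [nibbleMatching, coe_filter, mem_univ, true_and, Set.mem_ofPred_eq] at hi hj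
  refine disjoint_left.1 hi.2.2 hj.2.1 (mem_erase.2 ⟨by simpa using hij.symm, ?_⟩)
  exact inl_mem_touching.2 fun h => hd h.symm

lemma disjoint_of_nibbleResidue_ne_zero {C : Finset (ι ⊕ α)} {i j : ι}
    (hi : nibbleResidue e F η C i ≠ 0) (hj : j ∈ nibbleMatching e F C) :
    Disjoint (e i) (e j) := by
  have hmiss : Disjoint C (touching e (e i)) := by
    by_contra h
    exact hi (by simp [nibbleResidue, missIndicator, h])
  by_contra hd
  exact disjoint_left.1 hmiss (mem_filter.1 hj).2.2.1 (inl_mem_touching.2 fun h => hd h.symm)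

lemma nibbleResidue_nonneg (hF : ∀ i, 0 ≤ F i) (C : Finset (ι ⊕ α)) (i : ι) :
    0 ≤ nibbleResidue e F η C i :=
  mul_nonneg (mul_nonneg (hF i) (Real.exp_pos _).le) (missIndicator_nonneg _ _)

lemma nibbleResidue_mul (e : ι → Finset α) (F : ι → ℝ) (η : ℝ) (C : Finset (ι ⊕ α)) (i j : ι) :
    nibbleResidue e F η C i * nibbleResidue e F η C j =
      F i * F j * Real.exp (η * (#(e i) + #(e j) - 2)) *
        missIndicator (touching e (e i ∪ e j)) C := by
  have hexp : Real.exp (η * (#(e i) + #(e j) - 2)) =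
      Real.exp (η * (#(e i) - 1)) * Real.exp (η * (#(e j) - 1)) := by
    rw [← Real.exp_add]
    ring_nf
  rw [touching_union, missIndicator_union, hexp, nibbleResidue, nibbleResidue]
  ring

lemma nibbleResidue_mul_missIndicator {i : ι} {x : α} (hx : x ∈ e i) (C : Finset (ι ⊕ α)) :
    nibbleResidue e F η C i * missIndicator (touching e {x}) C = nibbleResidue e F η C i := by
  have hsub : touching e (e i) ∪ touching e {x} = touching e (e i) :=
    union_eq_left.2 (touching_mono (singleton_subset_iff.2 hx))
  rw [nibbleResidue, mul_assoc, ← missIndicator_union, hsub]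

lemma poissonMean_missIndicator_touching [Fintype α] (e : ι → Finset α) (F : ι → ℝ) (η : ℝ)
    (Y : Finset α) : poissonMean (nibbleRate e F η) (missIndicator (touching e Y)) =
      Real.exp (-(η * hitWeight e F Y)) := by
  rw [poissonMean_missIndicator, sum_nibbleRate_touching]

lemma exp_neg_mul_sum_le_poissonMean_nibbleResidue [Fintype α] (hF : ∀ i, 0 ≤ F i)
    (hw : ∀ i, 0 ≤ w i) (hη : 0 ≤ η) (s : Finset ι) :
    Real.exp (-η) * ∑ i ∈ s, F i * w i ≤
      poissonMean (nibbleRate e F η) fun C => ∑ i ∈ s, nibbleResidue e F η C i * w i := by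
  have hsurvival : ∀ i, Real.exp (-η) ≤ Real.exp (η * (#(e i) - 1)) *
      poissonMean (nibbleRate e F η) (missIndicator (touching e (e i))) := by
    intro i
    rw [poissonMean_missIndicator_touching, ← Real.exp_add, Real.exp_le_exp]
    nlinarith [hitWeight_le (e := e) hF (e i)]
  rw [poissonMean_sum, mul_sum]
  refine sum_le_sum fun i _ => ?_
  calc Real.exp (-η) * (F i * w i) ≤ Real.exp (η * (#(e i) - 1)) *
        poissonMean (nibbleRate e F η) (missIndicator (touching e (e i))) * (F i * w i) :=
        mul_le_mul_of_nonneg_right (hsurvival i) (mul_nonneg (hF i) (hw i))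
    _ = poissonMean (nibbleRate e F η) fun C => nibbleResidue e F η C i * w i := by
        rw [mul_right_comm, ← poissonMean_const_mul]
        congr 1 with C
        rw [nibbleResidue]
        ring

lemma mul_one_sub_exp_le {a : ℝ} (ha0 : 0 ≤ a) (ha1 : a ≤ 1) (η : ℝ) :
    a * (1 - Real.exp (-η)) ≤ 1 - Real.exp (-(η * a)) := by
  have hconv := convexOn_exp.2 (Set.mem_univ (-η)) (Set.mem_univ 0) ha0 (sub_nonneg.2 ha1)
    (by ring)
  simp only [smul_eq_mul, mul_zero, add_zero, Real.exp_zero, mul_one] at hconv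
  rw [show a * -η = -(η * a) by ring] at hconv
  linarith

lemma max_sub_one_le {l m κ : ℝ} (hl : l ≤ 1) (hκ : 0 < κ) :
    max (m - 1) 0 ≤ κ / 2 + (2 * κ)⁻¹ * (m - l) ^ 2 := by
  have hsq : κ / 2 + (2 * κ)⁻¹ * (m - l) ^ 2 - (m - l) = (2 * κ)⁻¹ * (m - l - κ) ^ 2 := by
    field_simp
    ring
  have hsq0 : 0 ≤ (2 * κ)⁻¹ * (m - l - κ) ^ 2 := by positivity
  exact max_le (by linarith) (by positivity)

namespace IsSparseFracMatching

variable (h : IsSparseFracMatching r δ e F)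
include h

omit [DecidableEq ι] in
lemma nibbleRate_nonneg (hη : 0 ≤ η) (k : ι ⊕ α) : 0 ≤ nibbleRate e F η k := by
  rcases k with i | x
  · exact mul_nonneg hη (h.nonneg i)
  · exact mul_nonneg hη (sub_nonneg.2 (h.load_le_one x))

lemma nibbleResidue_le (hη : 0 ≤ η) (C : Finset (ι ⊕ α)) (i : ι) :
    nibbleResidue e F η C i ≤ F i * Real.exp (η * r) := by
  have hcard : (#(e i) : ℝ) ≤ r := by exact_mod_cast h.card_le i
  calc nibbleResidue e F η C i ≤ F i * Real.exp (η * (#(e i) - 1)) :=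
        mul_le_of_le_one_right (mul_nonneg (h.nonneg i) (Real.exp_pos _).le)
          (missIndicator_le_one _ _)
    _ ≤ F i * Real.exp (η * r) := by
        gcongr
        · exact h.nonneg i
        · linarith

lemma exp_mul_le_poissonMean_mem_nibbleMatching [Fintype α] (hη : 0 ≤ η) (i : ι) :
    Real.exp (-(η * r)) * (1 - Real.exp (-η)) * F i ≤
      poissonMean (nibbleRate e F η) fun C => if i ∈ nibbleMatching e F C then 1 else 0 := by
  set S := (touching e (e i)).erase (Sum.inl i)
  have hS : ∑ k ∈ S, nibbleRate e F η k ≤ η * r := by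
    calc _ ≤ ∑ k ∈ touching e (e i), nibbleRate e F η k :=
          sum_le_sum_of_subset_of_nonneg (erase_subset _ _) fun k _ _ => h.nibbleRate_nonneg hη k
      _ = η * hitWeight e F (e i) := sum_nibbleRate_touching ..
      _ ≤ η * r := mul_le_mul_of_nonneg_left
          ((hitWeight_le h.nonneg _).trans (by exact_mod_cast h.card_le i)) hη
  have hselect := mul_one_sub_exp_le (h.nonneg i) (h.le_one i) η
  have hexp : 0 ≤ 1 - Real.exp (-η) := sub_nonneg.2 (Real.exp_le_one_iff.2 (neg_nonpos.2 hη))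
  rcases eq_or_ne (F i) 0 with hi | hi
  · simp [nibbleMatching, hi, poissonMean_const]
  calc _ = F i * (1 - Real.exp (-η)) * Real.exp (-(η * r)) := by ring
    _ ≤ (1 - Real.exp (-(η * F i))) * Real.exp (-∑ k ∈ S, nibbleRate e F η k) :=
        mul_le_mul hselect (Real.exp_le_exp.2 (neg_le_neg hS)) (Real.exp_pos _).le
          ((mul_nonneg (h.nonneg i) hexp).trans hselect)
    _ = _ := by
        refine (poissonMean_mem_mul_missIndicator (nibbleRate e F η) (k := Sum.inl i)
          (notMem_erase _ _)).symm.trans ?_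
        simp [nibbleMatching, hi]

lemma exp_mul_sum_le_poissonMean_nibbleMatching [Fintype α] (hw : ∀ i, 0 ≤ w i) (hη : 0 ≤ η) :
    Real.exp (-(η * r)) * (1 - Real.exp (-η)) * ∑ i, F i * w i ≤
      poissonMean (nibbleRate e F η) fun C => ∑ i ∈ nibbleMatching e F C, w i := by
  have hsum : ∀ C, ∑ i ∈ nibbleMatching e F C, w i =
      ∑ i, w i * if i ∈ nibbleMatching e F C then 1 else 0 := fun C => by simp
  simp only [hsum, poissonMean_sum, poissonMean_const_mul, mul_sum]
  refine sum_le_sum fun i _ => ?_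
  calc _ = w i * (Real.exp (-(η * r)) * (1 - Real.exp (-η)) * F i) := by ring
    _ ≤ _ := mul_le_mul_of_nonneg_left
        (h.exp_mul_le_poissonMean_mem_nibbleMatching hη i) (hw i)

lemma exp_mul_poissonMean_union_le_of_inter_eq [Fintype α] (hη : 0 ≤ η) (hδ : 0 ≤ δ) {i j : ι}
    {x : α} (hij : e i ∩ e j = {x}) :
    Real.exp (η * (#(e i) + #(e j) - 2)) *
        poissonMean (nibbleRate e F η) (missIndicator (touching e (e i ∪ e j))) ≤
      Real.exp (-η) * Real.exp (4 * r ^ 2 * δ * η) := by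
  have hcard : (#(e i ∪ e j) : ℝ) = #(e i) + #(e j) - 1 := by
    have := card_union_add_card_inter (e i) (e j)
    rw [hij, card_singleton] at this
    rw [eq_sub_iff_add_eq]
    exact_mod_cast this
  have hsq : (#(e i ∪ e j) : ℝ) ^ 2 ≤ (2 * r) ^ 2 := by
    refine pow_le_pow_left₀ (Nat.cast_nonneg _) ?_ 2
    exact_mod_cast (card_union_le _ _).trans (by linarith [h.card_le i, h.card_le j])
  have hhit := mul_le_mul_of_nonneg_left (h.le_hitWeight hδ (e i ∪ e j)) hη
  rw [poissonMean_missIndicator_touching, ← Real.exp_add, ← Real.exp_add, Real.exp_le_exp]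
  nlinarith [mul_le_mul_of_nonneg_right hsq (mul_nonneg hδ hη)]

lemma exp_mul_poissonMean_union_le [Fintype α] (hη : 0 ≤ η) (hδ : 0 ≤ δ) {i j : ι} {x : α}
    (hi : x ∈ e i) (hj : x ∈ e j) :
    Real.exp (η * (#(e i) + #(e j) - 2)) *
        poissonMean (nibbleRate e F η) (missIndicator (touching e (e i ∪ e j))) ≤
      Real.exp (-η) * Real.exp (4 * r ^ 2 * δ * η) +
        Real.exp (2 * r * η) * #(e i ∩ (e j).erase x) := by
  rcases (e i ∩ (e j).erase x).eq_empty_or_nonempty with hempty | hne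
  · have hij : e i ∩ e j = {x} := by
      rw [inter_erase, erase_eq_empty_iff] at hempty
      exact hempty.resolve_left (ne_empty_of_mem (mem_inter.2 ⟨hi, hj⟩))
    simpa [hempty] using h.exp_mul_poissonMean_union_le_of_inter_eq hη hδ hij
  · have hone : (1 : ℝ) ≤ #(e i ∩ (e j).erase x) := by exact_mod_cast hne.card_pos
    have hexp : Real.exp (η * (#(e i) + #(e j) - 2)) ≤ Real.exp (2 * r * η) := by
      have hri : (#(e i) : ℝ) ≤ r := by exact_mod_cast h.card_le i
      have hrj : (#(e j) : ℝ) ≤ r := by exact_mod_cast h.card_le j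
      rw [Real.exp_le_exp]
      nlinarith
    have hmean : poissonMean (nibbleRate e F η) (missIndicator (touching e (e i ∪ e j))) ≤ 1 :=
      (poissonMean_mono (h.nibbleRate_nonneg hη) (missIndicator_le_one _)).trans_eq
        (poissonMean_const _ 1)
    calc _ ≤ Real.exp (2 * r * η) * 1 := by
          refine (mul_le_of_le_one_right (Real.exp_pos _).le hmean).trans ?_
          rwa [mul_one]
      _ ≤ Real.exp (2 * r * η) * #(e i ∩ (e j).erase x) :=
          mul_le_mul_of_nonneg_left hone (Real.exp_pos _).le
      _ ≤ _ := le_add_of_nonneg_left (by positivity)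

omit [DecidableEq ι] in
lemma sum_mul_card_inter_erase_le (hδ : 0 ≤ δ) (x : α) :
    ∑ j with x ∈ e j, ∑ i with x ∈ e i, F j * (F i * #(e i ∩ (e j).erase x)) ≤ r * δ := by
  calc _ = ∑ j with x ∈ e j, F j * ∑ y ∈ (e j).erase x, codegree e F x y := by
        simp only [sum_codegree, mul_sum]
    _ ≤ ∑ j with x ∈ e j, F j * (r * δ) := by
        refine sum_le_sum fun j _ => mul_le_mul_of_nonneg_left ?_ (h.nonneg j)
        calc _ ≤ ∑ _y ∈ (e j).erase x, δ :=
              sum_le_sum fun y hy => h.codegree_le x y (ne_of_mem_erase hy).symm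
          _ = #((e j).erase x) * δ := by rw [sum_const, nsmul_eq_mul]
          _ ≤ r * δ := by
              gcongr
              exact_mod_cast (card_le_card (erase_subset _ _)).trans (h.card_le j)
    _ = vertexLoad e F x * (r * δ) := by rw [← sum_mul, vertexLoad]
    _ ≤ r * δ := mul_le_of_le_one_left (by positivity) (h.load_le_one x)

lemma poissonMean_sq_vertexLoad_le [Fintype α] (hη : 0 ≤ η) (hδ : 0 ≤ δ) (x : α) :
    poissonMean (nibbleRate e F η) (fun C => vertexLoad e (nibbleResidue e F η C) x ^ 2) ≤
      vertexLoad e F x ^ 2 * (Real.exp (-η) * Real.exp (4 * r ^ 2 * δ * η)) +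
        Real.exp (2 * r * η) * (r * δ) := by
  set q := Real.exp (-η) * Real.exp (4 * r ^ 2 * δ * η)
  calc _ = ∑ j with x ∈ e j, ∑ i with x ∈ e i, poissonMean (nibbleRate e F η)
          (fun C => nibbleResidue e F η C i * nibbleResidue e F η C j) := by
        simp only [vertexLoad, sq, sum_mul_sum, poissonMean_sum]
        exact sum_comm
    _ ≤ ∑ j with x ∈ e j, ∑ i with x ∈ e i,
          (F j * F i * q + Real.exp (2 * r * η) * (F j * (F i * #(e i ∩ (e j).erase x)))) := by
        refine sum_le_sum fun j hj => sum_le_sum fun i hi => ?_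
        have hpair := mul_le_mul_of_nonneg_left (h.exp_mul_poissonMean_union_le hη hδ
          (mem_filter.1 hi).2 (mem_filter.1 hj).2) (mul_nonneg (h.nonneg i) (h.nonneg j))
        simp only [nibbleResidue_mul, poissonMean_const_mul]
        linarith
    _ = vertexLoad e F x ^ 2 * q + Real.exp (2 * r * η) *
          ∑ j with x ∈ e j, ∑ i with x ∈ e i, F j * (F i * #(e i ∩ (e j).erase x)) := by
        simp only [sum_add_distrib, vertexLoad, sq, ← mul_sum, ← sum_mul]
    _ ≤ _ := by
        gcongr
        exact h.sum_mul_card_inter_erase_le hδ x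

lemma poissonMean_sq_vertexLoad_sub_le [Fintype α] (hη : 0 ≤ η) (hδ : 0 ≤ δ) (x : α) :
    poissonMean (nibbleRate e F η) (fun C => (vertexLoad e (nibbleResidue e F η C) x -
      vertexLoad e F x * missIndicator (touching e {x}) C) ^ 2) ≤ nibbleVariance r δ η := by
  set μ := nibbleRate e F η
  set l := vertexLoad e F x
  have hl0 : 0 ≤ l := vertexLoad_nonneg h.nonneg x
  have hexpand : ∀ C, (vertexLoad e (nibbleResidue e F η C) x -
      l * missIndicator (touching e {x}) C) ^ 2 =
        vertexLoad e (nibbleResidue e F η C) x ^ 2 -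
          2 * l * vertexLoad e (nibbleResidue e F η C) x +
          l ^ 2 * missIndicator (touching e {x}) C := by
    intro C
    have hload : vertexLoad e (nibbleResidue e F η C) x * missIndicator (touching e {x}) C =
        vertexLoad e (nibbleResidue e F η C) x := by
      rw [vertexLoad, sum_mul]
      exact sum_congr rfl fun i hi => nibbleResidue_mul_missIndicator (mem_filter.1 hi).2 C
    have hmiss := missIndicator_union (touching e {x}) (touching e {x}) C
    rw [union_self] at hmiss
    linear_combination l ^ 2 * (-hmiss) - 2 * l * hload
  have hfirst : Real.exp (-η) * l ≤
      poissonMean μ fun C => vertexLoad e (nibbleResidue e F η C) x := by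
    simpa [l, vertexLoad] using exp_neg_mul_sum_le_poissonMean_nibbleResidue (e := e) h.nonneg
      (w := fun _ => 1) (fun _ => zero_le_one) hη {i | x ∈ e i}
  have hsecond := h.poissonMean_sq_vertexLoad_le hη hδ x
  simp only [hexpand, poissonMean_add, poissonMean_sub, poissonMean_const_mul, μ,
    poissonMean_missIndicator_touching, hitWeight_singleton, mul_one]
  have hq : l ^ 2 * Real.exp (-η) ≤ 1 :=
    mul_le_one₀ (pow_le_one₀ hl0 (h.load_le_one x)) (Real.exp_pos _).le
      (Real.exp_le_one_iff.2 (neg_nonpos.2 hη))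
  have hE : 0 ≤ Real.exp (4 * r ^ 2 * δ * η) - 1 :=
    sub_nonneg.2 (Real.one_le_exp (by positivity))
  rw [nibbleVariance]
  nlinarith [mul_le_mul_of_nonneg_right hq hE, mul_le_mul_of_nonneg_left hfirst hl0]

lemma poissonMean_excess_le [Fintype α] (hη : 0 ≤ η) (hδ : 0 ≤ δ) {κ : ℝ} (hκ : 0 < κ)
    (hvar : nibbleVariance r δ η ≤ κ ^ 2) (x : α) :
    poissonMean (nibbleRate e F η)
      (fun C => max (vertexLoad e (nibbleResidue e F η C) x - 1) 0) ≤ κ := by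
  calc _ ≤ poissonMean (nibbleRate e F η) fun C => κ / 2 + (2 * κ)⁻¹ *
          (vertexLoad e (nibbleResidue e F η C) x -
            vertexLoad e F x * missIndicator (touching e {x}) C) ^ 2 := by
        refine poissonMean_mono (h.nibbleRate_nonneg hη) fun C => max_sub_one_le ?_ hκ
        exact mul_le_one₀ (h.load_le_one x) (missIndicator_nonneg _ _) (missIndicator_le_one _ _)
    _ ≤ κ / 2 + (2 * κ)⁻¹ * κ ^ 2 := by
        rw [poissonMean_add, poissonMean_const, poissonMean_const_mul]
        gcongr
        exact (h.poissonMean_sq_vertexLoad_sub_le hη hδ x).trans hvar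
    _ = κ := by
        field_simp
        norm_num

lemma exists_nibble_step [Fintype α] (hw : ∀ i, 0 ≤ w i) (hη : 0 ≤ η) (hδ : 0 ≤ δ) {κ β : ℝ}
    (hκ : 0 < κ) (hvar : nibbleVariance r δ η ≤ κ ^ 2) (hβ : 0 ≤ β) :
    ∃ C : Finset (ι ⊕ α),
      (Real.exp (-(η * r)) * (1 - Real.exp (-η)) + β * Real.exp (-η)) * (∑ i, F i * w i) -
          β * (Fintype.card α * κ) ≤
        ∑ i ∈ nibbleMatching e F C, w i + β * (∑ i, nibbleResidue e F η C i * w i -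
          ∑ x, max (vertexLoad e (nibbleResidue e F η C) x - 1) 0) := by
  obtain ⟨C, hC⟩ := exists_poissonMean_le (h.nibbleRate_nonneg hη) fun C =>
    ∑ i ∈ nibbleMatching e F C, w i + β * (∑ i, nibbleResidue e F η C i * w i -
      ∑ x, max (vertexLoad e (nibbleResidue e F η C) x - 1) 0)
  refine ⟨C, le_trans ?_ hC⟩
  have hexcess : (∑ x, poissonMean (nibbleRate e F η)
      fun C => max (vertexLoad e (nibbleResidue e F η C) x - 1) 0) ≤
        Fintype.card α * κ := by
    refine (sum_le_sum fun x _ => h.poissonMean_excess_le hη hδ hκ hvar x).trans_eq ?_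
    rw [sum_const, nsmul_eq_mul, card_univ]
  rw [poissonMean_add, poissonMean_const_mul, poissonMean_sub,
    poissonMean_sum _ univ fun x C => max (vertexLoad e (nibbleResidue e F η C) x - 1) 0]
  have hmatching := h.exp_mul_sum_le_poissonMean_nibbleMatching hw hη
  have hresidue := exp_neg_mul_sum_le_poissonMean_nibbleResidue (e := e) h.nonneg hw hη univ
  have hgain := mul_le_mul_of_nonneg_left (sub_le_sub hresidue hexcess) hβ
  linarith

end IsSparseFracMatching

end Nibble

section Rounding

universe u v

lemma exists_nibbleVariance_le (r : ℕ) (η : ℝ) {a b σ : ℝ} (hb : 0 < b) (hσ : 0 < σ) :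
    ∃ δ : ℝ, 0 < δ ∧ δ * a ≤ b ∧ nibbleVariance r δ η ≤ σ := by
  have hlin : Filter.Tendsto (fun δ : ℝ => δ * a) (nhdsWithin 0 (Set.Ioi 0)) (nhds (0 * a)) :=
    (Continuous.tendsto (by fun_prop) 0).mono_left nhdsWithin_le_nhds
  have hvar : Filter.Tendsto (fun δ : ℝ => nibbleVariance r δ η) (nhdsWithin 0 (Set.Ioi 0))
      (nhds (nibbleVariance r 0 η)) :=
    (Continuous.tendsto (by unfold nibbleVariance; fun_prop) 0).mono_left nhdsWithin_le_nhds
  have hlin' := hlin.eventually_le_const (u := b) (by simpa using hb)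
  have hvar' := hvar.eventually_le_const (u := σ) (by simpa [nibbleVariance] using hσ)
  obtain ⟨δ, hδ, hδ0⟩ := ((hlin'.and hvar').and self_mem_nhdsWithin).exists
  exact ⟨δ, hδ0, hδ.1, hδ.2⟩

variable {ι : Type u} {α : Type v} [Fintype ι] [DecidableEq ι] [DecidableEq α]
  {e : ι → Finset α} {F F' : ι → ℝ} {r : ℕ} {δ δ' η : ℝ}

lemma IsSparseFracMatching.of_le_nibbleResidue (h : IsSparseFracMatching r δ e F) (hη : 0 ≤ η)
    {C : Finset (ι ⊕ α)} (hF'0 : ∀ i, 0 ≤ F' i) (hF' : ∀ i, F' i ≤ nibbleResidue e F η C i)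
    (hload : ∀ x, vertexLoad e F' x ≤ 1) (hδ' : δ * Real.exp (η * r) ≤ δ') :
    IsSparseFracMatching r δ' e F' where
  nonneg := hF'0
  nonempty := h.nonempty
  card_le := h.card_le
  load_le_one := hload
  codegree_le x y hxy := by
    calc codegree e F' x y ≤ codegree e F x y * Real.exp (η * r) := by
          rw [codegree, codegree, sum_mul]
          exact sum_le_sum fun i _ => (hF' i).trans (h.nibbleResidue_le hη C i)
      _ ≤ δ * Real.exp (η * r) :=
          mul_le_mul_of_nonneg_right (h.codegree_le x y hxy) (Real.exp_pos _).le
      _ ≤ δ' := hδ'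

lemma pairwiseDisjoint_nibbleMatching_union {C : Finset (ι ⊕ α)} {M : Finset ι}
    (hM : (M : Set ι).PairwiseDisjoint e) (hMC : ∀ i ∈ M, nibbleResidue e F η C i ≠ 0) :
    ((nibbleMatching e F C ∪ M : Finset ι) : Set ι).PairwiseDisjoint e := by
  rw [coe_union, Set.pairwiseDisjoint_union]
  exact ⟨nibbleMatching_pairwiseDisjoint e F C, hM, fun i hi j hj _ =>
    (disjoint_of_nibbleResidue_ne_zero (hMC j hj) hi).symm⟩

/-- The proportion of the weight of a fractional matching that `L` rounds of the nibble select. -/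
noncomputable def nibbleGain (r : ℕ) (η : ℝ) (L : ℕ) : ℝ :=
  Real.exp (-(η * r)) * (1 - Real.exp (-η) ^ L)

lemma nibbleGain_mem_Icc (r : ℕ) (hη : 0 ≤ η) (L : ℕ) : nibbleGain r η L ∈ Set.Icc 0 1 := by
  have hq : Real.exp (-η) ^ L ≤ 1 :=
    pow_le_one₀ (Real.exp_pos _).le (Real.exp_le_one_iff.2 (neg_nonpos.2 hη))
  have hq0 : 0 ≤ Real.exp (-η) ^ L := pow_nonneg (Real.exp_pos _).le L
  exact ⟨mul_nonneg (Real.exp_pos _).le (sub_nonneg.2 hq), mul_le_one₀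
    (Real.exp_le_one_iff.2 (neg_nonpos.2 (by positivity))) (sub_nonneg.2 hq) (by linarith)⟩

lemma nibbleGain_succ (r : ℕ) (η : ℝ) (L : ℕ) : nibbleGain r η (L + 1) =
    Real.exp (-(η * r)) * (1 - Real.exp (-η)) + nibbleGain r η L * Real.exp (-η) := by
  rw [nibbleGain, nibbleGain, pow_succ]
  ring

lemma exists_le_nibbleGain (r : ℕ) {ε : ℝ} (hε : 0 < ε) :
    ∃ η : ℝ, 0 < η ∧ ∃ L : ℕ, 1 - ε ≤ nibbleGain r η L := by
  set η := ε / (2 * (r + 1)) with hη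
  have hη0 : 0 < η := by positivity
  obtain ⟨L, hL⟩ := exists_pow_lt_of_lt_one (half_pos hε) (y := Real.exp (-η)) (by simpa using hη0)
  refine ⟨η, hη0, L, ?_⟩
  have hηr : η * r ≤ ε / 2 := by
    rw [hη, div_mul_eq_mul_div, div_le_div_iff₀ (by positivity) two_pos]
    nlinarith
  have hexp : Real.exp (-(η * r)) ≤ 1 := Real.exp_le_one_iff.2 (neg_nonpos.2 (by positivity))
  have hpow : 0 < Real.exp (-η) ^ L := pow_pos (Real.exp_pos _) _
  rw [nibbleGain]
  nlinarith [Real.add_one_le_exp (-(η * r))]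

lemma exists_matching_of_nibbleGain (r : ℕ) (hη : 0 ≤ η) (L : ℕ) : ∀ ε : ℝ, 0 < ε →
    ∃ δ : ℝ, 0 < δ ∧ ∀ (ι : Type u) (α : Type v) [Fintype ι] [Fintype α] [DecidableEq α]
      (e : ι → Finset α) (F w : ι → ℝ), IsSparseFracMatching r δ e F →
      (∀ i, w i ∈ Set.Icc 0 1) →
      ∃ M : Finset ι, (∀ i ∈ M, F i ≠ 0) ∧ (M : Set ι).PairwiseDisjoint e ∧
        nibbleGain r η L * (∑ i, F i * w i) - ε * Fintype.card α ≤ ∑ i ∈ M, w i := by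
  induction L with
  | zero =>
    refine fun ε hε => ⟨1, one_pos, fun ι α _ _ _ e F w _ _ => ⟨∅, by simp, by simp, ?_⟩⟩
    simp only [nibbleGain, pow_zero, sub_self, mul_zero, zero_mul, zero_sub, sum_empty,
      Left.neg_nonpos_iff]
    positivity
  | succ L ih =>
    intro ε hε
    obtain ⟨δ', hδ', ih⟩ := ih (ε / 2) (half_pos hε)
    obtain ⟨δ, hδ, hδle, hvar⟩ := exists_nibbleVariance_le r η (a := Real.exp (η * r)) hδ'
      (σ := (ε / 2) ^ 2) (by positivity)
    refine ⟨δ, hδ, fun ι α _ _ _ e F w h hw => ?_⟩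
    classical
    obtain ⟨hβ0, hβ1⟩ := nibbleGain_mem_Icc r hη L
    obtain ⟨C, hC⟩ := h.exists_nibble_step (fun i => (hw i).1) hη hδ.le (half_pos hε) hvar hβ0
    obtain ⟨F', hF'0, hF'le, hF'load, hF'loss⟩ :=
      exists_le_vertexLoad_le_one e (nibbleResidue_nonneg (η := η) h.nonneg C)
    obtain ⟨M, hMF', hM, hMval⟩ := ih ι α e F' w
      (h.of_le_nibbleResidue hη hF'0 hF'le hF'load hδle) hw
    have hMC : ∀ i ∈ M, nibbleResidue e F η C i ≠ 0 := fun i hi h0 =>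
      hMF' i hi (le_antisymm (h0 ▸ hF'le i) (hF'0 i))
    have hdisj : Disjoint (nibbleMatching e F C) M := disjoint_left.2 fun i hi hi' =>
      (h.nonempty i).ne_empty (disjoint_self.1 (disjoint_of_nibbleResidue_ne_zero (hMC i hi') hi))
    refine ⟨nibbleMatching e F C ∪ M, fun i hi => ?_,
      pairwiseDisjoint_nibbleMatching_union hM hMC, ?_⟩
    · rcases mem_union.1 hi with hi | hi
      · exact (mem_filter.1 hi).2.1
      · exact fun h0 => hMC i hi (by simp [nibbleResidue, h0])
    · have hrest := mul_le_mul_of_nonneg_left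
        ((sub_le_sub_left hF'loss _).trans
          (sum_mul_sub_sum_sub_le hF'le fun i => (hw i).2)) hβ0
      have herror : nibbleGain r η L * (Fintype.card α * (ε / 2)) ≤ Fintype.card α * (ε / 2) :=
        mul_le_of_le_one_left (by positivity) hβ1
      rw [sum_union hdisj, nibbleGain_succ]
      linarith

/-- **Pippenger's theorem**, weighted version. -/
theorem exists_matching_of_isSparseFracMatching (r : ℕ) {ε : ℝ} (hε : 0 < ε) :
    ∃ δ : ℝ, 0 < δ ∧ ∀ (ι : Type u) (α : Type v) [Fintype ι] [Fintype α] [DecidableEq α]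
      (e : ι → Finset α) (F w : ι → ℝ), IsSparseFracMatching r δ e F →
      (∀ i, w i ∈ Set.Icc 0 1) →
      ∃ M : Finset ι, (∀ i ∈ M, F i ≠ 0) ∧ (M : Set ι).PairwiseDisjoint e ∧
        ∑ i, F i * w i - ε * Fintype.card α ≤ ∑ i ∈ M, w i := by
  obtain ⟨η, hη, L, hL⟩ := exists_le_nibbleGain r (half_pos hε)
  obtain ⟨δ, hδ, h⟩ := exists_matching_of_nibbleGain.{u, v} r hη.le L (ε / 2) (half_pos hε)
  refine ⟨δ, hδ, fun ι α _ _ _ e F w hF hw => ?_⟩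
  obtain ⟨M, hMF, hM, hMval⟩ := h ι α e F w hF hw
  refine ⟨M, hMF, hM, le_trans ?_ hMval⟩
  have hcard := hF.sum_mul_le_card fun i => (hw i).2
  have hsum : 0 ≤ ∑ i, F i * w i := sum_nonneg fun i _ => mul_nonneg (hF.nonneg i) (hw i).1
  nlinarith [mul_le_mul_of_nonneg_right hL hsum]

end Rounding

/-! ### Regularity and counting -/

section Regularity

lemma abs_card_interedges_sub_le {α : Type*} {G : SimpleGraph α} {ε : ℝ} {s t A B : Finset α}
    (h : G.IsUniform ε s t) (hA : A ⊆ s) (hB : B ⊆ t) :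
    |(#(G.interedges A B) : ℝ) - G.edgeDensity s t * (#A * #B)| ≤ ε * (#s * #t) := by
  have hε := h.pos
  have hAs : (#A : ℝ) ≤ #s := by exact_mod_cast card_le_card hA
  have hBt : (#B : ℝ) ≤ #t := by exact_mod_cast card_le_card hB
  have hcard : (#(G.interedges A B) : ℝ) = G.edgeDensity A B * (#A * #B) := by
    have hle : (#(G.interedges A B) : ℝ) ≤ #A * #B := by
      exact_mod_cast G.card_interedges_le_mul A B
    rw [SimpleGraph.edgeDensity_def]
    push_cast
    rw [div_mul_cancel_of_imp fun hz => le_antisymm (hz ▸ hle) (Nat.cast_nonneg _)]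
  have hdiff : |(G.edgeDensity A B - G.edgeDensity s t : ℝ)| ≤ 1 := by
    have hbd (U W : Finset α) : 0 ≤ (G.edgeDensity U W : ℝ) ∧ (G.edgeDensity U W : ℝ) ≤ 1 :=
      ⟨by exact_mod_cast G.edgeDensity_nonneg U W, by exact_mod_cast G.edgeDensity_le_one U W⟩
    exact abs_sub_le_iff.2 ⟨by linarith [hbd A B, hbd s t], by linarith [hbd A B, hbd s t]⟩
  rw [hcard, ← sub_mul, abs_mul, abs_of_nonneg (by positivity : (0 : ℝ) ≤ #A * #B)]
  rcases lt_or_ge (#A : ℝ) (#s * ε) with hA' | hA'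
  · calc _ ≤ 1 * ((#s * ε) * #t : ℝ) := by gcongr
      _ = _ := by ring
  rcases lt_or_ge (#B : ℝ) (#t * ε) with hB' | hB'
  · calc _ ≤ 1 * (#s * (#t * ε) : ℝ) := by gcongr
      _ = _ := by ring
  · calc _ ≤ ε * (#A * #B : ℝ) := by gcongr; exact (h hA hB hA' hB').le
      _ ≤ _ := by gcongr

variable {V κ : Type*} [Fintype V] [DecidableEq κ]

/-- The vertices of colour `i` under the colouring `p`. -/
def colorClass (p : V → κ) (i : κ) : Finset V := {v | p v = i}

@[simp]
lemma mem_colorClass {p : V → κ} {i : κ} {v : V} : v ∈ colorClass p i ↔ p v = i := by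
  simp [colorClass]

/-- A regular partition of the vertices of `G`, presented as a colouring `p` together with a
reduced graph `R` on the colours: colour classes have at least `m` vertices, and any two classes
adjacent in `R` form an `ε`-uniform pair of density at least `d`. -/
structure IsRegularColoring (G : SimpleGraph V) (p : V → κ) (R : SimpleGraph κ) (d ε : ℝ)
    (m : ℕ) : Prop where
  size_pos : 0 < m
  density_pos : 0 < d
  density_le_one : d ≤ 1
  error_pos : 0 < ε
  le_card_colorClass : ∀ i, m ≤ #(colorClass p i)
  isUniform : ∀ ⦃i j⦄, R.Adj i j → G.IsUniform ε (colorClass p i) (colorClass p j)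
  le_edgeDensity : ∀ ⦃i j⦄, R.Adj i j → d ≤ G.edgeDensity (colorClass p i) (colorClass p j)

lemma IsRegularColoring.colorClass_pos {G : SimpleGraph V} {p : V → κ} {R : SimpleGraph κ}
    {d ε : ℝ} {m : ℕ} (h : IsRegularColoring G p R d ε m) (i : κ) : 0 < #(colorClass p i) :=
  h.size_pos.trans_le (h.le_card_colorClass i)

/-- The graph on the colours that joins two distinct classes of `p` when they form an `ε`-uniform
pair of density at least `d`. -/
def reducedGraph (G : SimpleGraph V) (p : V → κ) (d ε : ℝ) : SimpleGraph κ where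
  Adj i j := i ≠ j ∧ G.IsUniform ε (colorClass p i) (colorClass p j) ∧
    d ≤ G.edgeDensity (colorClass p i) (colorClass p j)
  symm := ⟨fun _ _ ⟨hne, hu, hd⟩ => ⟨hne.symm, hu.symm, by rwa [G.edgeDensity_comm]⟩⟩
  loopless := ⟨fun _ h => h.1 rfl⟩

variable [DecidableEq V]

/-- The colouring of the vertices by the parts of a partition, numbered arbitrarily. -/
noncomputable def partColoring (P : Finpartition (univ : Finset V)) (v : V) : Fin #P.parts :=
  P.parts.equivFin ⟨P.part v, P.part_mem.2 (mem_univ v)⟩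

lemma colorClass_partColoring (P : Finpartition (univ : Finset V)) (i : Fin #P.parts) :
    colorClass (partColoring P) i = (P.parts.equivFin.symm i).1 := by
  ext v
  rw [mem_colorClass, partColoring, ← Equiv.eq_symm_apply, Subtype.ext_iff]
  exact P.part_eq_iff_mem (P.parts.equivFin.symm i).2

lemma colorClass_partColoring_apply (P : Finpartition (univ : Finset V)) (v : V) :
    colorClass (partColoring P) (partColoring P v) = P.part v := by
  simp [colorClass_partColoring, partColoring]

/-- The pairs of adjacent vertices whose colours are not adjacent in `R`. -/
noncomputable def unreducedPairs (G : SimpleGraph V) (p : V → κ) (R : SimpleGraph κ) :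
    Finset (V × V) :=
  {q | G.Adj q.1 q.2 ∧ ¬ R.Adj (p q.1) (p q.2)}

lemma unreducedPairs_subset (G : SimpleGraph V) (P : Finpartition (univ : Finset V)) {d d' ε : ℝ}
    (hd : d ≤ d') :
    unreducedPairs G (partColoring P) (reducedGraph G (partColoring P) d ε) ⊆
      (P.nonUniforms G ε).biUnion (fun (U, W) ↦ U ×ˢ W) ∪ P.parts.biUnion offDiag ∪
        (P.sparsePairs G d').biUnion (fun (U, W) ↦ G.interedges U W) := by
  rintro ⟨x, y⟩ hxy
  simp only [unreducedPairs, reducedGraph, mem_filter, mem_univ, true_and,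
    colorClass_partColoring_apply] at hxy
  obtain ⟨hadj, hR⟩ := hxy
  have hx : x ∈ P.part x := P.mem_part (mem_univ x)
  have hy : y ∈ P.part y := P.mem_part (mem_univ y)
  have hPx : P.part x ∈ P.parts := P.part_mem.2 (mem_univ x)
  have hPy : P.part y ∈ P.parts := P.part_mem.2 (mem_univ y)
  simp only [mem_union, mem_biUnion]
  by_cases hpart : P.part x = P.part y
  · exact .inl (.inr ⟨P.part x, hPx, mem_offDiag.2 ⟨hx, hpart ▸ hy, hadj.ne⟩⟩)
  by_cases hu : G.IsUniform ε (P.part x) (P.part y)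
  · have hcolor : partColoring P x ≠ partColoring P y := fun h =>
      hpart (by rw [← colorClass_partColoring_apply, h, colorClass_partColoring_apply])
    refine .inr ⟨(P.part x, P.part y), ?_, G.mem_interedges_iff.2 ⟨hx, hy, hadj⟩⟩
    exact P.mk_mem_sparsePairs .. |>.2
      ⟨hPx, hPy, hpart, lt_of_not_ge fun h => hR ⟨hcolor, hu, hd.trans h⟩⟩
  · refine .inl (.inl ⟨(P.part x, P.part y), ?_, mem_product.2 ⟨hx, hy⟩⟩)
    exact P.mk_mem_nonUniforms .. |>.2 ⟨hPx, hPy, hpart, hu⟩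

lemma card_unreducedPairs_le [Nonempty V] (G : SimpleGraph V) {P : Finpartition (univ : Finset V)}
    {d ε γ : ℝ} (hP : P.IsEquipartition) (hγ : 0 < γ) (hcard : 16 / γ ≤ #P.parts) (hε : 0 < ε)
    (hεγ : ε ≤ γ / 16) (hd : d ≤ γ / 16) (hu : P.IsUniform G ε) :
    (#(unreducedPairs G (partColoring P) (reducedGraph G (partColoring P) d ε)) : ℝ) ≤
      γ * (Fintype.card V : ℝ) ^ 2 := by
  have hnonUniform := hP.sum_nonUniforms_lt (G := G) univ_nonempty hε hu
  have hinside := hP.card_biUnion_offDiag_le (ε := γ / 4) (by positivity)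
    ((by ring : 4 / (γ / 4) = 16 / γ).trans_le hcard)
  have hsparse := hP.card_interedges_sparsePairs_le (G := G) (ε := γ / 16) (by positivity)
  have hle := (card_le_card (unreducedPairs_subset (ε := ε) G P hd)).trans
    ((card_union_le _ _).trans (Nat.add_le_add_right (card_union_le _ _) _))
  rw [← Nat.cast_le (α := ℝ)] at hle
  push_cast at hle
  simp only [card_univ] at hnonUniform hinside hsparse
  have hε' : ε * (Fintype.card V : ℝ) ^ 2 ≤ γ / 16 * (Fintype.card V : ℝ) ^ 2 := by gcongr
  have : 0 ≤ γ * (Fintype.card V : ℝ) ^ 2 := by positivity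
  linarith

theorem exists_isRegularColoring {γ : ℝ} (hγ : 0 < γ) :
    ∃ d : ℝ, 0 < d ∧ d ≤ 1 ∧ ∀ ε : ℝ, 0 < ε → ∀ m : ℕ, 0 < m → ∃ n₀ : ℕ,
      ∀ (V : Type*) [Fintype V] [DecidableEq V], n₀ ≤ Fintype.card V → ∀ G : SimpleGraph V,
        ∃ (k : ℕ) (p : V → Fin k) (R : SimpleGraph (Fin k)), IsRegularColoring G p R d ε m ∧
          (#(unreducedPairs G p R) : ℝ) ≤ γ * (Fintype.card V : ℝ) ^ 2 := by
  refine ⟨min 1 (γ / 16), by positivity, min_le_left _ _, fun ε hε m hm => ?_⟩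
  set ε' := min ε (γ / 16)
  have hε' : 0 < ε' := by positivity
  set l := ⌈16 / γ⌉₊
  refine ⟨l + m * SzemerediRegularity.bound ε' l + 1, fun V _ _ hn G => ?_⟩
  have : Nonempty V := Fintype.card_pos_iff.1 (by omega)
  obtain ⟨P, hP, hl, hPb, hu⟩ := szemeredi_regularity G hε' (l := l) (by nlinarith)
  refine ⟨#P.parts, partColoring P, reducedGraph G (partColoring P) (min 1 (γ / 16)) ε',
    { size_pos := hm
      density_pos := by positivity
      density_le_one := min_le_left _ _
      error_pos := hε
      le_card_colorClass := fun i => ?_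
      isUniform := fun i j h => h.2.1.mono (min_le_left _ _)
      le_edgeDensity := fun i j h => h.2.2 }, ?_⟩
  · rw [colorClass_partColoring]
    refine le_trans ?_ (hP.average_le_card_part (P.parts.equivFin.symm i).2)
    rw [Nat.le_div_iff_mul_le i.pos, card_univ]
    exact (Nat.mul_le_mul_left _ hPb).trans (by omega)
  · exact card_unreducedPairs_le G hP hγ ((Nat.le_ceil _).trans (by exact_mod_cast hl)) hε'
      (min_le_right _ _) (min_le_right _ _) hu

end Regularity

section SplitsAt

variable {V κ : Type*}

/-- The property `Q` of vertex choices is the conjunction of a property that ignores the vertex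
chosen for colour `i` and one that ignores the vertex chosen for colour `j`. -/
def SplitsAt (i j : κ) (Q : (κ → V) → Prop) : Prop :=
  ∃ Q₁ Q₂ : (κ → V) → Prop, DependsOn Q₁ {i}ᶜ ∧ DependsOn Q₂ {j}ᶜ ∧ ∀ x, Q x ↔ Q₁ x ∧ Q₂ x

lemma splitsAt_of_dependsOn {i j : κ} {Q : (κ → V) → Prop} {s : Set κ} (hQ : DependsOn Q s)
    (hs : ¬ (i ∈ s ∧ j ∈ s)) : SplitsAt i j Q := by
  have hTrue (l : Set κ) : DependsOn (fun _ : κ → V => True) l := fun _ _ _ => rfl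
  have hcompl {l : κ} (hl : l ∉ s) : DependsOn Q {l}ᶜ := fun x y hxy =>
    hQ fun a ha => hxy a fun hal => hl (hal ▸ ha)
  rcases not_and_or.1 hs with hi | hj
  · exact ⟨Q, fun _ => True, hcompl hi, hTrue _, by simp⟩
  · exact ⟨fun _ => True, Q, hTrue _, hcompl hj, by simp⟩

lemma SplitsAt.and {i j : κ} {Q Q' : (κ → V) → Prop} (hQ : SplitsAt i j Q)
    (hQ' : SplitsAt i j Q') : SplitsAt i j fun x => Q x ∧ Q' x := by
  obtain ⟨Q₁, Q₂, h₁, h₂, h⟩ := hQ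
  obtain ⟨Q₁', Q₂', h₁', h₂', h'⟩ := hQ'
  refine ⟨fun x => Q₁ x ∧ Q₁' x, fun x => Q₂ x ∧ Q₂' x, fun x y hxy => ?_, fun x y hxy => ?_,
    fun x => ((h x).and (h' x)).trans and_and_and_comm⟩
  · simp only [h₁ hxy, h₁' hxy]
  · simp only [h₂ hxy, h₂' hxy]

lemma splitsAt_forall {ι : Sort*} {i j : κ} {Q : ι → (κ → V) → Prop}
    (hQ : ∀ a, SplitsAt i j (Q a)) : SplitsAt i j fun x => ∀ a, Q a x := by
  choose Q₁ Q₂ h₁ h₂ h using hQ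
  refine ⟨fun x => ∀ a, Q₁ a x, fun x => ∀ a, Q₂ a x, fun x y hxy => ?_, fun x y hxy => ?_,
    fun x => by simp only [h, forall_and]⟩
  · simp only [fun a => h₁ a hxy]
  · simp only [fun a => h₂ a hxy]

lemma dependsOn_adj (G : SimpleGraph V) (i j : κ) :
    DependsOn (fun x : κ → V => G.Adj (x i) (x j)) {i, j} := fun x y hxy => by
  simp only [hxy i (.inl rfl), hxy j (.inr rfl)]

end SplitsAt

section Transversals

variable {V κ : Type*} [Fintype V] [Fintype κ] [DecidableEq κ]

/-- The choices of one vertex from every colour class. -/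
def transversals (p : V → κ) : Finset (κ → V) := Fintype.piFinset (colorClass p)

@[simp]
lemma mem_transversals {p : V → κ} {x : κ → V} : x ∈ transversals p ↔ ∀ i, p (x i) = i := by
  simp [transversals]

lemma card_filter_transversals_mul {p : V → κ} {i j : κ} (hij : i ≠ j) (Q : (κ → V) → Prop)
    [DecidablePred Q] :
    #{x ∈ transversals p | Q x} * (#(colorClass p i) * #(colorClass p j)) =
      ∑ x ∈ transversals p, #{q ∈ colorClass p i ×ˢ colorClass p j |
        Q (Function.update (Function.update x i q.1) j q.2)} := by
  rw [← card_product, ← card_product, ← card_sigma]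
  refine card_nbij'
    (fun z => ⟨Function.update (Function.update z.1 i z.2.1) j z.2.2, z.1 i, z.1 j⟩)
    (fun z => ⟨Function.update (Function.update z.1 i z.2.1) j z.2.2, z.1 i, z.1 j⟩)
    ?_ ?_ ?_ ?_
  all_goals
    rintro ⟨x, u, v⟩ h
    have hx : Function.update (Function.update (Function.update (Function.update x i u) j v) i
        (x i)) j (x j) = x := by grind
    simp only [coe_product, coe_filter, coe_sigma, Set.mem_prod, Set.mem_sigma_iff,
      Set.mem_ofPred_eq, mem_coe, mem_product, mem_colorClass, mem_transversals] at h
    simp only [coe_product, coe_filter, coe_sigma, Set.mem_prod, Set.mem_sigma_iff,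
      Set.mem_ofPred_eq, mem_coe, mem_product, mem_colorClass, mem_transversals, hx,
      Function.update_self, Function.update_of_ne hij]
    try grind

omit [Fintype κ] in
lemma abs_card_update_adj_sub_le {G : SimpleGraph V} {p : V → κ} {ε : ℝ} {i j : κ}
    (h : G.IsUniform ε (colorClass p i) (colorClass p j)) {Q : (κ → V) → Prop}
    (hQ : SplitsAt i j Q) (x : κ → V) :
    |(#{q ∈ colorClass p i ×ˢ colorClass p j |
        Q (Function.update (Function.update x i q.1) j q.2) ∧ G.Adj q.1 q.2} : ℝ) -
      G.edgeDensity (colorClass p i) (colorClass p j) *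
        #{q ∈ colorClass p i ×ˢ colorClass p j |
          Q (Function.update (Function.update x i q.1) j q.2)}| ≤
      ε * (#(colorClass p i) * #(colorClass p j)) := by
  obtain ⟨Q₁, Q₂, h₁, h₂, hQ⟩ := hQ
  have hupdate (u v : V) : Q (Function.update (Function.update x i u) j v) ↔
      Q₁ (Function.update x j v) ∧ Q₂ (Function.update x i u) := by
    rw [hQ, h₁ (y := Function.update x j v) (by intro l hl; grind),
      h₂ (y := Function.update x i u) (by intro l hl; grind)]
  convert abs_card_interedges_sub_le h (filter_subset (fun u => Q₂ (Function.update x i u)) _)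
    (filter_subset (fun v => Q₁ (Function.update x j v)) _) using 4
  · congr 1
    ext ⟨u, v⟩
    simp only [mem_filter, mem_product, SimpleGraph.mem_interedges_iff, hupdate]
    tauto
  · rw [← Nat.cast_mul, ← card_product]
    congr 2
    ext ⟨u, v⟩
    simp only [mem_filter, mem_product, hupdate]
    tauto

lemma abs_card_adj_sub_le {G : SimpleGraph V} {p : V → κ} {ε : ℝ} {i j : κ} (hij : i ≠ j)
    (h : G.IsUniform ε (colorClass p i) (colorClass p j)) {Q : (κ → V) → Prop}
    (hQ : SplitsAt i j Q) :
    |(#{x ∈ transversals p | Q x ∧ G.Adj (x i) (x j)} : ℝ) -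
      G.edgeDensity (colorClass p i) (colorClass p j) * #{x ∈ transversals p | Q x}| ≤
        ε * #(transversals p) := by
  obtain h0 | ⟨x₀, hx₀⟩ := (transversals p).eq_empty_or_nonempty
  · simp [h0]
  have hpos (l : κ) : 0 < #(colorClass p l) :=
    card_pos.2 ⟨x₀ l, mem_colorClass.2 (mem_transversals.1 hx₀ l)⟩
  have hcount (Q' : (κ → V) → Prop) [DecidablePred Q'] := congrArg (Nat.cast (R := ℝ))
    (card_filter_transversals_mul (p := p) hij Q')
  push_cast at hcount
  have hp : (0 : ℝ) < #(colorClass p i) * #(colorClass p j) := by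
    exact_mod_cast Nat.mul_pos (hpos i) (hpos j)
  refine le_of_mul_le_mul_right ?_ hp
  rw [← abs_of_pos hp, ← abs_mul, abs_of_pos hp, sub_mul, mul_assoc, hcount Q,
    hcount fun x => Q x ∧ G.Adj (x i) (x j), mul_sum, ← sum_sub_distrib]
  simp only [Function.update_self, Function.update_of_ne hij]
  refine (abs_sum_le_sum_abs _ _).trans
    ((sum_le_sum fun x _ => abs_card_update_adj_sub_le h hQ x).trans_eq ?_)
  rw [sum_const, nsmul_eq_mul]
  ring

/-- The transversals whose restriction to the colours in `I` spans a clique of `G`. -/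
noncomputable def cliqueTransversals (G : SimpleGraph V) (p : V → κ) (I : Finset κ) :
    Finset (κ → V) :=
  {x ∈ transversals p | (I : Set κ).Pairwise fun i j => G.Adj (x i) (x j)}

/-- A lower bound for the proportion of transversals that span a clique on a given set of at most
`s` pairwise `R`-adjacent colours, for a regular colouring with density `d` and error `ε`. -/
def cliqueDensity (d ε : ℝ) (s : ℕ) : ℝ := d ^ s ^ 2 - s ^ 2 * ε

namespace IsRegularColoring

variable {G : SimpleGraph V} {p : V → κ} {R : SimpleGraph κ} {d ε : ℝ} {m s : ℕ} {I J : Finset κ}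

lemma exists_abs_card_forall_adj_sub_le (h : IsRegularColoring G p R d ε m)
    (S : Finset (Sym2 κ)) (hS : ∀ i j, s(i, j) ∈ S → R.Adj i j ∧ ¬ (i ∈ J ∧ j ∈ J)) :
    ∃ q : ℝ, d ^ #S ≤ q ∧ ∀ B : (κ → V) → Prop, DependsOn B J →
      |(#{x ∈ transversals p | B x ∧ ∀ i j, s(i, j) ∈ S → G.Adj (x i) (x j)} : ℝ) -
        q * #{x ∈ transversals p | B x}| ≤ #S * ε * #(transversals p) := by
  induction S using Finset.induction_on with
  | empty => exact ⟨1, by simp⟩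
  | insert e S heS ih =>
    obtain ⟨q, hq, ih⟩ := ih fun i j hij => hS i j (mem_insert_of_mem hij)
    induction e using Sym2.ind with | _ i j =>
    obtain ⟨hR, hJ⟩ := hS i j (mem_insert_self _ _)
    set D : ℝ := (G.edgeDensity (colorClass p i) (colorClass p j) : ℝ)
    have hdD : d ≤ D := h.le_edgeDensity hR
    have hD0 : 0 ≤ D := h.density_pos.le.trans hdD
    have hD1 : D ≤ 1 := mod_cast Rat.cast_le.2 (G.edgeDensity_le_one _ _)
    refine ⟨D * q, ?_, fun B hB => ?_⟩
    · rw [card_insert_of_notMem heS, pow_succ']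
      exact mul_le_mul hdD hq (pow_nonneg h.density_pos.le _) hD0
    have hsplit : SplitsAt i j fun x => B x ∧ ∀ i j, s(i, j) ∈ S → G.Adj (x i) (x j) := by
      refine (splitsAt_of_dependsOn hB (by simpa using hJ)).and
        (splitsAt_forall fun i' => splitsAt_forall fun j' => splitsAt_forall fun hS' =>
          splitsAt_of_dependsOn (dependsOn_adj G i' j') ?_)
      rintro ⟨hi, hj⟩
      exact heS ((Sym2.mem_and_mem_iff hR.ne).1 ⟨Sym2.mem_iff.2 hi, Sym2.mem_iff.2 hj⟩ ▸ hS')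
    have hinsert (x : κ → V) :
        (B x ∧ ∀ a b, s(a, b) ∈ insert s(i, j) S → G.Adj (x a) (x b)) ↔
          (B x ∧ ∀ a b, s(a, b) ∈ S → G.Adj (x a) (x b)) ∧ G.Adj (x i) (x j) := by
      simp only [mem_insert, Sym2.eq_iff]
      grind [G.adj_comm]
    simp only [hinsert]
    have hstep := abs_card_adj_sub_le hR.ne (h.isUniform hR) hsplit
    set b : ℝ := (#{x ∈ transversals p | B x ∧ ∀ a b, s(a, b) ∈ S → G.Adj (x a) (x b)} : ℝ)
    set c : ℝ := (#{x ∈ transversals p | B x} : ℝ)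
    calc _ ≤ _ := abs_sub_le _ (D * b) _
      _ = _ + D * |b - q * c| := by rw [mul_assoc, ← mul_sub, abs_mul, abs_of_nonneg hD0]
      _ ≤ ε * #(transversals p) + 1 * (#S * ε * #(transversals p)) := by
        gcongr
        · exact le_of_eq_of_le (by congr!) hstep
        · exact ih B hB
      _ = _ := by rw [card_insert_of_notMem heS]; push_cast; ring

lemma exists_abs_card_cliqueTransversals_sub_le (h : IsRegularColoring G p R d ε m)
    (hIs : #I ≤ s) (hJI : J ⊆ I) (hI : R.IsClique I) :
    ∃ q : ℝ, d ^ s ^ 2 ≤ q ∧ ∀ (B : (κ → V) → Prop) [DecidablePred B], DependsOn B J →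
      |(#{x ∈ cliqueTransversals G p I | B x} : ℝ) - q * #{x ∈ cliqueTransversals G p J | B x}| ≤
        s ^ 2 * ε * #(transversals p) := by
  set S : Finset (Sym2 κ) := {e ∈ I.sym2 | ¬ e.IsDiag ∧ e ∉ J.sym2} with hS
  have hmem (i j : κ) : s(i, j) ∈ S ↔ (i ∈ I ∧ j ∈ I) ∧ i ≠ j ∧ ¬ (i ∈ J ∧ j ∈ J) := by
    simp only [hS, mem_filter, mk_mem_sym2_iff, Sym2.mk_isDiag_iff]
  have hcard : #S ≤ s ^ 2 := calc
    #S ≤ (#I + 1).choose 2 := (card_filter_le _ _).trans_eq (card_sym2 I)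
    _ ≤ (s + 1).choose 2 := Nat.choose_le_choose 2 (by omega)
    _ ≤ s ^ 2 := by
      rw [Nat.choose_two_right, Nat.add_sub_cancel]
      exact Nat.div_le_of_le_mul (by nlinarith)
  obtain ⟨q, hq, hcount⟩ := h.exists_abs_card_forall_adj_sub_le (J := J) S fun i j hij =>
    ⟨hI ((hmem i j).1 hij).1.1 ((hmem i j).1 hij).1.2 ((hmem i j).1 hij).2.1,
      ((hmem i j).1 hij).2.2⟩
  refine ⟨q, (pow_le_pow_of_le_one h.density_pos.le h.density_le_one hcard).trans hq,
    fun B _ hB => ?_⟩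
  set B' : (κ → V) → Prop := fun x => B x ∧ (J : Set κ).Pairwise fun i j => G.Adj (x i) (x j)
    with hB'
  have hB'J : DependsOn B' J := by
    intro x y hxy
    have hpair : ∀ i ∈ J, ∀ j ∈ J, (G.Adj (x i) (x j) ↔ G.Adj (y i) (y j)) := fun i hi j hj => by
      rw [hxy i hi, hxy j hj]
    simp only [hB', hB hxy, Set.Pairwise, mem_coe]
    grind
  have hfilterI : {x ∈ cliqueTransversals G p I | B x} =
      {x ∈ transversals p | B' x ∧ ∀ i j, s(i, j) ∈ S → G.Adj (x i) (x j)} := by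
    ext x
    simp only [cliqueTransversals, mem_filter, hmem, hB', Set.Pairwise, mem_coe]
    grind
  have hfilterJ : {x ∈ cliqueTransversals G p J | B x} = {x ∈ transversals p | B' x} := by
    ext x
    simp only [cliqueTransversals, mem_filter, hB']
    tauto
  have := h.error_pos
  calc _ ≤ #S * ε * #(transversals p) := by rw [hfilterI, hfilterJ]; convert hcount B' hB'J
    _ ≤ s ^ 2 * ε * #(transversals p) := by gcongr; exact_mod_cast hcard

lemma cliqueDensity_mul_le (h : IsRegularColoring G p R d ε m) (hIs : #I ≤ s)
    (hI : R.IsClique I) :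
    cliqueDensity d ε s * #(transversals p) ≤ #(cliqueTransversals G p I) := by
  obtain ⟨q, hq, hcount⟩ :=
    h.exists_abs_card_cliqueTransversals_sub_le hIs (J := ∅) (empty_subset I) hI
  have hempty : cliqueTransversals G p ∅ = transversals p := by simp [cliqueTransversals]
  have hcount := (abs_le.1 (hcount (fun _ => True) fun _ _ _ => rfl)).1
  simp only [filter_true, hempty] at hcount
  have hdq := mul_le_mul_of_nonneg_right hq (Nat.cast_nonneg (α := ℝ) #(transversals p))
  rw [cliqueDensity]
  linarith

lemma card_transversals_pos (h : IsRegularColoring G p R d ε m) :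
    0 < #(transversals p) :=
  card_pos.2 (Fintype.piFinset_nonempty.2 fun i => card_pos.1 (h.colorClass_pos i))

lemma card_cliqueTransversals_pos (h : IsRegularColoring G p R d ε m) (hIs : #I ≤ s)
    (hI : R.IsClique I) (hδ : 0 < cliqueDensity d ε s) : 0 < #(cliqueTransversals G p I) := by
  have hΩ : (0 : ℝ) < #(transversals p) := mod_cast h.card_transversals_pos
  exact_mod_cast (mul_pos hδ hΩ).trans_le (h.cliqueDensity_mul_le hIs hI)

lemma card_filter_cliqueTransversals_div_le (h : IsRegularColoring G p R d ε m) (hIs : #I ≤ s)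
    (hJI : J ⊆ I) (hI : R.IsClique I) (hδ : 0 < cliqueDensity d ε s) {B : (κ → V) → Prop}
    [DecidablePred B] (hB : DependsOn B J) :
    (#{x ∈ cliqueTransversals G p I | B x} : ℝ) / #(cliqueTransversals G p I) ≤
      #{x ∈ cliqueTransversals G p J | B x} / #(cliqueTransversals G p J) +
        2 * (s ^ 2 * ε / cliqueDensity d ε s) := by
  obtain ⟨q, -, hcount⟩ := h.exists_abs_card_cliqueTransversals_sub_le hIs hJI hI
  have hBI := (abs_le.1 (hcount B hB)).2
  have hIJ := (abs_le.1 (hcount (fun _ => True) fun _ _ _ => rfl)).1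
  simp only [filter_true] at hIJ
  have he : (0 : ℝ) < #(cliqueTransversals G p I) :=
    mod_cast h.card_cliqueTransversals_pos hIs hI hδ
  have hc : (0 : ℝ) < #(cliqueTransversals G p J) := mod_cast
    h.card_cliqueTransversals_pos ((card_le_card hJI).trans hIs) (hI.subset hJI) hδ
  have hbc : (#{x ∈ cliqueTransversals G p J | B x} : ℝ) / #(cliqueTransversals G p J) ≤ 1 :=
    (div_le_one hc).2 (mod_cast card_filter_le _ _)
  have herror : s ^ 2 * ε * #(transversals p) ≤
      s ^ 2 * ε / cliqueDensity d ε s * #(cliqueTransversals G p I) := by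
    have := h.error_pos
    rw [div_mul_eq_mul_div, le_div_iff₀ hδ, mul_assoc, mul_comm _ (cliqueDensity d ε s)]
    gcongr
    exact h.cliqueDensity_mul_le hIs hI
  have herror_nonneg : 0 ≤ s ^ 2 * ε * #(transversals p) := by
    have := h.error_pos
    positivity
  set err : ℝ := s ^ 2 * ε * #(transversals p)
  set β : ℝ := (#{x ∈ cliqueTransversals G p J | B x} : ℝ) / #(cliqueTransversals G p J)
  have hβ : 0 ≤ β := by positivity
  rw [div_le_iff₀ he]
  calc (#{x ∈ cliqueTransversals G p I | B x} : ℝ)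
      ≤ β * (q * #(cliqueTransversals G p J)) + err := by
        have := div_mul_cancel₀ (#{x ∈ cliqueTransversals G p J | B x} : ℝ) hc.ne'
        linear_combination hBI - q * this
    _ ≤ β * (#(cliqueTransversals G p I) + err) + err := by gcongr; linarith
    _ = β * #(cliqueTransversals G p I) + (β * err + err) := by ring
    _ ≤ β * #(cliqueTransversals G p I) + (1 * err + err) := by gcongr
    _ ≤ _ := by linarith

end IsRegularColoring

end Transversals

/-! ### Spreading clique packings -/

section CliquePacking

variable {V κ : Type*} [Fintype V] [DecidableEq V]

/-- The total weight of the sets containing `T`. -/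
def supersetWeight (g : Finset V → ℝ) (T : Finset V) : ℝ := ∑ K with T ⊆ K, g K

lemma supersetWeight_nonneg {g : Finset V → ℝ} (hg : ∀ K, 0 ≤ g K) (T : Finset V) :
    0 ≤ supersetWeight g T :=
  sum_nonneg fun K _ => hg K

lemma supersetWeight_le_of_le {g g' : Finset V → ℝ} (h : ∀ K, g K ≤ g' K) (T : Finset V) :
    supersetWeight g T ≤ supersetWeight g' T :=
  sum_le_sum fun K _ => h K

lemma supersetWeight_anti {g : Finset V → ℝ} (hg : ∀ K, 0 ≤ g K) {T U : Finset V} (hTU : T ⊆ U) :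
    supersetWeight g U ≤ supersetWeight g T :=
  sum_le_sum_of_subset_of_nonneg (monotone_filter_right _ fun _ _ => hTU.trans)
    fun K _ _ => hg K

lemma sum_supersetWeight (g : Finset V → ℝ) (A : Finset (Finset V)) :
    ∑ T ∈ A, supersetWeight g T = ∑ K, g K * #{T ∈ A | T ⊆ K} := by
  simp only [supersetWeight, sum_filter]
  rw [sum_comm]
  refine sum_congr rfl fun K _ => ?_
  rw [← sum_filter, sum_const, nsmul_eq_mul, mul_comm]

lemma sum_le_sum_supersetWeight {g : Finset V → ℝ} (hg : ∀ K, 0 ≤ g K)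
    {S A : Finset (Finset V)} (hSA : ∀ K ∈ S, g K ≠ 0 → ∃ T ∈ A, T ⊆ K) :
    ∑ K ∈ S, g K ≤ ∑ T ∈ A, supersetWeight g T := by
  rw [sum_supersetWeight]
  refine (sum_le_sum fun K hK => ?_).trans
    (sum_le_univ_sum_of_nonneg fun K => mul_nonneg (hg K) (Nat.cast_nonneg _))
  by_cases hgK : g K = 0
  · rw [hgK, zero_mul]
  · obtain ⟨T, hT, hTK⟩ := hSA K hK hgK
    have : (1 : ℝ) ≤ #{T ∈ A | T ⊆ K} :=
      mod_cast card_pos.2 ⟨T, mem_filter.2 ⟨hT, hTK⟩⟩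
    exact le_mul_of_one_le_right (hg K) this

/-- The sets of `t` vertices contained in `K`, as a hyperedge on the vertex set of all `t`-sets. -/
def tSubsets (t : ℕ) (K : Finset V) : Finset {T : Finset V // #T = t} := {T | T.1 ⊆ K}

@[simp]
lemma mem_tSubsets {t : ℕ} {K : Finset V} {T : {T : Finset V // #T = t}} :
    T ∈ tSubsets t K ↔ T.1 ⊆ K := by
  simp [tSubsets]

lemma card_tSubsets (t : ℕ) (K : Finset V) : #(tSubsets t K) = (#K).choose t := by
  rw [← card_powersetCard, ← card_map (Function.Embedding.subtype _)]
  congr 1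
  ext T
  simp [mem_powersetCard, and_comm]

omit [DecidableEq V] in
lemma sum_tSets (t : ℕ) (φ : Finset V → ℝ) :
    ∑ T : {T : Finset V // #T = t}, φ T = ∑ T ∈ univ.powersetCard t, φ T :=
  (sum_subtype _ (fun T => by simp) φ).symm

lemma exists_le_supersetWeight_le_one (t : ℕ) {F : Finset V → ℝ} (hF : ∀ K, 0 ≤ F K) :
    ∃ F' : Finset V → ℝ, (∀ K, 0 ≤ F' K) ∧ (∀ K, F' K ≤ F K) ∧
      (∀ T, #T = t → supersetWeight F' T ≤ 1) ∧
      ∑ K, (F K - F' K) ≤ ∑ T ∈ univ.powersetCard t, max (supersetWeight F T - 1) 0 := by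
  have hload (F : Finset V → ℝ) (T : {T : Finset V // #T = t}) :
      vertexLoad (tSubsets t) F T = supersetWeight F T := by
    simp only [vertexLoad, supersetWeight, mem_tSubsets]
  obtain ⟨F', hF'0, hF'F, hF'1, hloss⟩ := exists_le_vertexLoad_le_one (tSubsets t) hF
  simp only [hload] at hF'1 hloss
  exact ⟨F', hF'0, hF'F, fun T hT => hF'1 ⟨T, hT⟩,
    hloss.trans_eq (sum_tSets t fun T => max (supersetWeight F T - 1) 0)⟩

/-- A fractional packing of cliques of `G` with sizes between `t` and `s`: every `t`-set is
contained in cliques of total weight at most one. -/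
structure IsCliquePacking (t s : ℕ) (G : SimpleGraph V) (g : Finset V → ℝ) : Prop where
  nonneg : ∀ K, 0 ≤ g K
  isClique : ∀ ⦃K : Finset V⦄, g K ≠ 0 → G.IsClique (K : Set V)
  le_card : ∀ ⦃K : Finset V⦄, g K ≠ 0 → t ≤ #K
  card_le : ∀ ⦃K : Finset V⦄, g K ≠ 0 → #K ≤ s
  supersetWeight_le_one : ∀ ⦃T : Finset V⦄, #T = t → supersetWeight g T ≤ 1

namespace IsCliquePacking

variable {t s : ℕ} {G : SimpleGraph V} {g : Finset V → ℝ}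

lemma sum_le_card (hg : IsCliquePacking t s G g) {S A : Finset (Finset V)}
    (hA : ∀ T ∈ A, #T = t) (hSA : ∀ K ∈ S, g K ≠ 0 → ∃ T ∈ A, T ⊆ K) :
    ∑ K ∈ S, g K ≤ #A :=
  (sum_le_sum_supersetWeight hg.nonneg hSA).trans <|
    (sum_le_card_nsmul A _ 1 fun _ hT => hg.supersetWeight_le_one (hA _ hT)).trans_eq <| by simp

lemma sum_le_card_mul_of_pairs (hg : IsCliquePacking t s G g) (ht : 2 ≤ t)
    {S : Finset (Finset V)} {E : Finset (V × V)} (hE : ∀ e ∈ E, e.1 ≠ e.2)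
    (hS : ∀ K ∈ S, g K ≠ 0 → ∃ e ∈ E, e.1 ∈ K ∧ e.2 ∈ K) :
    ∑ K ∈ S, g K ≤ #E * (Fintype.card V : ℝ) ^ (t - 2) := by
  set tSetsThrough : V × V → Finset (Finset V) := fun e =>
    {T ∈ univ.powersetCard t | {e.1, e.2} ⊆ T} with htSetsThrough
  have hcard : #(E.biUnion tSetsThrough) ≤ #E * Fintype.card V ^ (t - 2) := by
    refine card_biUnion_le_card_mul _ _ _ fun e he => ?_
    have hpair : #({e.1, e.2} : Finset V) = 2 := card_pair (hE e he)
    rw [htSetsThrough, card_filter_powersetCard_subset _ _ _ (subset_univ _) (hpair ▸ ht), hpair,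
      card_univ]
    exact (Nat.choose_le_choose _ (Nat.sub_le _ _)).trans (Nat.choose_le_pow _ _)
  refine (hg.sum_le_card (A := E.biUnion tSetsThrough) (fun T hT => ?_)
    fun K hK hgK => ?_).trans (mod_cast hcard)
  · obtain ⟨e, -, he⟩ := mem_biUnion.1 hT
    exact (mem_powersetCard.1 (mem_filter.1 he).1).2
  · obtain ⟨e, he, he₁, he₂⟩ := hS K hK hgK
    obtain ⟨T, heT, hTK, hT⟩ := exists_subsuperset_card_eq (s := {e.1, e.2})
      (by simp [insert_subset_iff, he₁, he₂]) (card_le_two.trans ht) (hg.le_card hgK)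
    exact ⟨T, mem_biUnion.2 ⟨e, he, mem_filter.2 ⟨mem_powersetCard.2 ⟨subset_univ _, hT⟩, heT⟩⟩,
      hTK⟩

lemma of_le (hg : IsCliquePacking t s G g) {g' : Finset V → ℝ} (hg' : ∀ K, 0 ≤ g' K)
    (hle : ∀ K, g' K ≤ g K) {G' : SimpleGraph V}
    (hclique : ∀ K : Finset V, g' K ≠ 0 → G'.IsClique (K : Set V)) :
    IsCliquePacking t s G' g' := by
  have hne (K : Finset V) (hK : g' K ≠ 0) : g K ≠ 0 := fun h =>
    hK (le_antisymm (h ▸ hle K) (hg' K))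
  exact ⟨hg', hclique, fun K hK => hg.le_card (hne K hK), fun K hK => hg.card_le (hne K hK),
    fun T hT => (supersetWeight_le_of_le hle T).trans (hg.supersetWeight_le_one hT)⟩

lemma exists_reduced (hg : IsCliquePacking t s G g) (ht : 2 ≤ t) (p : V → κ)
    (R : SimpleGraph κ) :
    ∃ g', IsCliquePacking t s (G ⊓ R.comap p) g' ∧ (∀ K, g' K ≤ g K) ∧
      ∑ K, (g K - g' K) ≤ #(unreducedPairs G p R) * (Fintype.card V : ℝ) ^ (t - 2) := by
  set g' : Finset V → ℝ := fun K => if (R.comap p).IsClique (K : Set V) then g K else 0 with hg'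
  have hle (K : Finset V) : g' K ≤ g K := by
    simp only [hg']; split_ifs; exacts [le_rfl, hg.nonneg K]
  have hloss : ∑ K, (g K - g' K) =
      ∑ K with ¬ (R.comap p).IsClique ((K : Finset V) : Set V), g K := by
    rw [sum_filter]
    refine sum_congr rfl fun K _ => ?_
    simp only [hg', ite_not]
    split_ifs <;> ring
  refine ⟨g', hg.of_le (fun K => ?_) hle fun K hK => ?_, hle, hloss.trans_le
    (hg.sum_le_card_mul_of_pairs ht (E := unreducedPairs G p R)
      (fun e he => (mem_filter.1 he).2.1.ne) fun K hK hgK => ?_)⟩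
  · simp only [hg']; split_ifs; exacts [hg.nonneg K, le_rfl]
  · obtain ⟨hR, hgK⟩ := ite_ne_right_iff.1 hK
    exact fun u hu v hv huv => ⟨hg.isClique hgK hu hv huv, hR hu hv huv⟩
  · have hR := (mem_filter.1 hK).2
    simp only [SimpleGraph.IsClique, Set.Pairwise] at hR
    push Not at hR
    obtain ⟨u, hu, v, hv, huv, hR⟩ := hR
    exact ⟨(u, v), mem_filter.2 ⟨mem_univ _, hg.isClique hgK hu hv huv, hR⟩, hu, hv⟩

end IsCliquePacking

end CliquePacking

section ColorfulCliques

variable {V κ : Type*} [Fintype V] [DecidableEq V] [Fintype κ] [DecidableEq κ]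
  {G : SimpleGraph V} {p : V → κ} {x : κ → V} {I J : Finset κ} {T : Finset V}

omit [DecidableEq V] in
lemma injective_of_mem_transversals (hx : x ∈ transversals p) : Function.Injective x :=
  Function.LeftInverse.injective (mem_transversals.1 hx)

lemma image_image_transversal (hx : x ∈ transversals p) (I : Finset κ) :
    (I.image x).image p = I := by
  rw [image_image, Function.LeftInverse.comp_eq_id (mem_transversals.1 hx), image_id]

lemma subset_image_transversal_iff (hx : x ∈ transversals p) :
    T ⊆ I.image x ↔ T.image p ⊆ I ∧ (T.image p).image x = T := by
  refine ⟨fun h => ⟨image_image_transversal hx I ▸ image_subset_image h, ?_⟩, fun h =>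
    h.2 ▸ image_subset_image h.1⟩
  rw [image_image]
  refine (image_congr fun v hv => ?_).trans image_id
  obtain ⟨i, -, rfl⟩ := mem_image.1 (h hv)
  exact congrArg x (mem_transversals.1 hx i)

lemma mem_cliqueTransversals :
    x ∈ cliqueTransversals G p I ↔ x ∈ transversals p ∧ G.IsClique (I.image x : Set V) := by
  rw [cliqueTransversals, mem_filter, SimpleGraph.IsClique, coe_image]
  exact and_congr_right fun hx =>
    ((injective_of_mem_transversals hx).injOn.pairwise_image).symm

/-- The cliques that meet each colour class in `J` exactly once and no other class. -/
noncomputable def colorfulCliques (G : SimpleGraph V) (p : V → κ) (J : Finset κ) :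
    Finset (Finset V) :=
  {T | #T = #J ∧ T.image p = J ∧ G.IsClique (T : Set V)}

omit [Fintype κ] in
lemma mem_colorfulCliques :
    T ∈ colorfulCliques G p J ↔ #T = #J ∧ T.image p = J ∧ G.IsClique (T : Set V) := by
  simp only [colorfulCliques, mem_filter, mem_univ, true_and]

lemma image_mem_colorfulCliques (hx : x ∈ cliqueTransversals G p J) :
    J.image x ∈ colorfulCliques G p J := by
  rw [mem_cliqueTransversals] at hx
  exact mem_colorfulCliques.2 ⟨card_image_of_injective _ (injective_of_mem_transversals hx.1),
    image_image_transversal hx.1 J, hx.2⟩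

/-- The number of ways to choose one vertex from each colour class outside `J`. -/
def freeChoices (p : V → κ) (J : Finset κ) : ℕ := ∏ i ∈ Jᶜ, #(colorClass p i)

omit [DecidableEq V] in
lemma freeChoices_erase (p : V → κ) {i : κ} (hi : i ∈ J) :
    freeChoices p (J.erase i) = #(colorClass p i) * freeChoices p J := by
  rw [freeChoices, compl_erase, prod_insert (by simpa using hi), freeChoices]

lemma card_transversals_through (hT : Set.InjOn p T) :
    #{x ∈ transversals p | (T.image p).image x = T} = freeChoices p (T.image p) := by
  have hpi : {x ∈ transversals p | (T.image p).image x = T} =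
      Fintype.piFinset fun i => {v ∈ colorClass p i | i ∈ T.image p → v ∈ T} := by
    ext x
    simp only [mem_filter, mem_transversals, Fintype.mem_piFinset, mem_colorClass, forall_and]
    refine and_congr_right fun hx => ⟨fun h i hi => h ▸ mem_image_of_mem x hi, fun h => ?_⟩
    rw [image_image]
    exact (image_congr fun v hv => hT (h _ (mem_image_of_mem p hv)) hv (hx _)).trans image_id
  rw [hpi, Fintype.card_piFinset, ← prod_mul_prod_compl (T.image p), freeChoices,
    prod_eq_one fun i hi => ?_, one_mul]
  · refine prod_congr rfl fun i hi => ?_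
    simp only [mem_compl.1 hi, false_imp_iff, filter_true]
  · obtain ⟨v, hv, rfl⟩ := mem_image.1 hi
    refine card_eq_one.2 ⟨v, ?_⟩
    ext u
    simp only [mem_filter, mem_colorClass, mem_singleton, hi, true_imp_iff]
    exact ⟨fun h => hT h.2 hv h.1, by rintro rfl; exact ⟨rfl, hv⟩⟩

omit [Fintype κ] in
lemma injOn_of_mem_colorfulCliques (hT : T ∈ colorfulCliques G p J) : Set.InjOn p T := by
  obtain ⟨hcard, rfl, -⟩ := mem_colorfulCliques.1 hT
  exact card_image_iff.1 hcard.symm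

lemma card_filter_image_mem {A : Finset (Finset V)} (hA : A ⊆ colorfulCliques G p J) :
    #{x ∈ cliqueTransversals G p J | J.image x ∈ A} = #A * freeChoices p J := by
  rw [← sum_card_fiberwise_eq_card_filter]
  refine sum_const_nat fun T hT => ?_
  have hinj := injOn_of_mem_colorfulCliques (hA hT)
  obtain ⟨-, rfl, hclique⟩ := mem_colorfulCliques.1 (hA hT)
  rw [← card_transversals_through hinj]
  congr 1
  ext x
  simp only [mem_filter, mem_cliqueTransversals]
  exact ⟨fun h => ⟨h.1.1, h.2⟩, fun h => ⟨⟨h.1, by rwa [h.2]⟩, h.2⟩⟩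

lemma card_cliqueTransversals (G : SimpleGraph V) (p : V → κ) (J : Finset κ) :
    #(cliqueTransversals G p J) = #(colorfulCliques G p J) * freeChoices p J := by
  rw [← card_filter_image_mem Subset.rfl, filter_true_of_mem]
  exact fun x hx => image_mem_colorfulCliques hx

lemma sum_card_subset_image_transversal {A : Finset (Finset V)}
    (hA : A ⊆ colorfulCliques G p J) (I : Finset κ) :
    ∑ T ∈ A, #{x ∈ cliqueTransversals G p I | T ⊆ I.image x} =
      if J ⊆ I then #{x ∈ cliqueTransversals G p I | J.image x ∈ A} else 0 := by
  have hsubset (T : Finset V) (hT : T ∈ A) :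
      #{x ∈ cliqueTransversals G p I | T ⊆ I.image x} =
        #{x ∈ cliqueTransversals G p I | J ⊆ I ∧ J.image x = T} := by
    obtain ⟨-, rfl, -⟩ := mem_colorfulCliques.1 (hA hT)
    exact congrArg card <| filter_congr fun x hx =>
      subset_image_transversal_iff (mem_cliqueTransversals.1 hx).1
  rw [sum_congr rfl hsubset]
  split_ifs with hJI
  · simp only [hJI, true_and, sum_card_fiberwise_eq_card_filter]
  · simp only [hJI, false_and, filter_false, card_empty, sum_const_zero]

end ColorfulCliques

section Spread

variable {V κ : Type*} [Fintype V] [DecidableEq V] [Fintype κ] [DecidableEq κ]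
  {G : SimpleGraph V} {p : V → κ} {g : Finset V → ℝ} {I J : Finset κ} {U : Finset V}

/-- The total weight of the sets whose set of colours is `I`. -/
def patternWeight (p : V → κ) (g : Finset V → ℝ) (I : Finset κ) : ℝ := ∑ K with K.image p = I, g K

omit [DecidableEq V] [Fintype κ] in
lemma patternWeight_nonneg (hg : ∀ K, 0 ≤ g K) (I : Finset κ) : 0 ≤ patternWeight p g I :=
  sum_nonneg fun K _ => hg K

omit [DecidableEq V] in
lemma sum_patternWeight_mul (φ : Finset κ → ℝ) :
    ∑ I, patternWeight p g I * φ I = ∑ K, g K * φ (K.image p) := by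
  rw [← sum_fiberwise univ (fun K : Finset V => K.image p) (fun K => g K * φ (K.image p))]
  refine sum_congr rfl fun I _ => ?_
  rw [patternWeight, sum_mul]
  exact sum_congr rfl fun K hK => by rw [(mem_filter.1 hK).2]

/-- Redistribute the weight of every colour pattern uniformly among the transversals that span a
clique on it. -/
noncomputable def spread (G : SimpleGraph V) (p : V → κ) (g : Finset V → ℝ) (K : Finset V) : ℝ :=
  ∑ I, patternWeight p g I *
    (#{x ∈ cliqueTransversals G p I | I.image x = K} / #(cliqueTransversals G p I))

lemma spread_nonneg (hg : ∀ K, 0 ≤ g K) (K : Finset V) : 0 ≤ spread G p g K :=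
  sum_nonneg fun I _ => mul_nonneg (patternWeight_nonneg hg I) (by positivity)

lemma exists_of_spread_ne_zero {K : Finset V} (h : spread G p g K ≠ 0) :
    ∃ I x, patternWeight p g I ≠ 0 ∧ x ∈ cliqueTransversals G p I ∧ I.image x = K := by
  obtain ⟨I, -, hI⟩ := exists_ne_zero_of_sum_ne_zero h
  have hcard : #{x ∈ cliqueTransversals G p I | I.image x = K} ≠ 0 := fun h0 =>
    right_ne_zero_of_mul hI (by rw [h0, Nat.cast_zero, zero_div])
  obtain ⟨x, hx⟩ := card_ne_zero.1 hcard
  exact ⟨I, x, left_ne_zero_of_mul hI, (mem_filter.1 hx).1, (mem_filter.1 hx).2⟩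

lemma sum_spread_mul (φ : Finset V → ℝ) :
    ∑ K, spread G p g K * φ K = ∑ I, patternWeight p g I *
      ((∑ x ∈ cliqueTransversals G p I, φ (I.image x)) / #(cliqueTransversals G p I)) := by
  simp only [spread, sum_mul]
  rw [sum_comm]
  refine sum_congr rfl fun I _ => ?_
  rw [← sum_fiberwise (cliqueTransversals G p I) (fun x => I.image x), sum_div, mul_sum]
  refine sum_congr rfl fun K _ => ?_
  rw [sum_congr rfl fun x hx => by rw [(mem_filter.1 hx).2], sum_const, nsmul_eq_mul]
  ring

lemma supersetWeight_spread (U : Finset V) :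
    supersetWeight (spread G p g) U = ∑ I, patternWeight p g I *
      (#{x ∈ cliqueTransversals G p I | U ⊆ I.image x} / #(cliqueTransversals G p I)) := by
  have := sum_spread_mul (G := G) (p := p) (g := g) fun K => if U ⊆ K then 1 else 0
  rw [supersetWeight]
  simpa only [mul_ite, mul_one, mul_zero, ← sum_filter, sum_const, nsmul_eq_mul] using this

lemma sum_supersetWeight_spread (A : Finset (Finset V)) :
    ∑ T ∈ A, supersetWeight (spread G p g) T = ∑ I, patternWeight p g I *
      ((∑ T ∈ A, #{x ∈ cliqueTransversals G p I | T ⊆ I.image x} : ℕ) /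
        #(cliqueTransversals G p I)) := by
  simp only [supersetWeight_spread, Nat.cast_sum, sum_div, mul_sum]
  exact sum_comm

lemma mem_colorfulCliques_of_supersetWeight_spread_ne_zero
    (hU : supersetWeight (spread G p g) U ≠ 0) : U ∈ colorfulCliques G p (U.image p) := by
  obtain ⟨K, hUK, hK⟩ := exists_ne_zero_of_sum_ne_zero hU
  obtain ⟨I, x, -, hx, rfl⟩ := exists_of_spread_ne_zero hK
  rw [mem_filter, subset_image_transversal_iff (mem_cliqueTransversals.1 hx).1] at hUK
  rw [mem_cliqueTransversals] at hx
  have hcard : #U = #(U.image p) := by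
    conv_lhs => rw [← hUK.2.2, card_image_of_injective _ (injective_of_mem_transversals hx.1)]
  refine mem_colorfulCliques.2 ⟨hcard, rfl, hx.2.subset ?_⟩
  exact_mod_cast hUK.2.2.symm.subset.trans (image_subset_image hUK.2.1)

end Spread

section SpreadPacking

variable {V κ : Type*} [Fintype V] [DecidableEq V] [Fintype κ] [DecidableEq κ]
  {G : SimpleGraph V} {p : V → κ} {R : SimpleGraph κ} {g : Finset V → ℝ} {I J : Finset κ}
  {U : Finset V} {d ε : ℝ} {m s t : ℕ}

omit [Fintype V] [DecidableEq V] [Fintype κ] [DecidableEq κ] in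
lemma injOn_of_isClique_comap {K : Finset V} (hK : (R.comap p).IsClique (K : Set V)) :
    Set.InjOn p K :=
  fun _ hu _ hv huv => by_contra fun hne => SimpleGraph.Adj.ne (G := R) (hK hu hv hne) huv

omit [Fintype V] [DecidableEq V] [Fintype κ] in
lemma isClique_image_of_isClique_comap {K : Finset V} (hK : (R.comap p).IsClique (K : Set V)) :
    R.IsClique (K.image p : Set κ) := by
  intro i hi j hj hij
  obtain ⟨u, hu, rfl⟩ := mem_image.1 hi
  obtain ⟨v, hv, rfl⟩ := mem_image.1 hj
  exact hK hu hv (ne_of_apply_ne p hij)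

lemma card_filter_subset_image_transversal_le (hU : U ∈ colorfulCliques G p J) (I : Finset κ) :
    #{x ∈ cliqueTransversals G p I | U ⊆ I.image x} ≤ if J ⊆ I then freeChoices p J else 0 := by
  have hsum := sum_card_subset_image_transversal (singleton_subset_iff.2 hU) I
  rw [sum_singleton] at hsum
  rw [hsum]
  split_ifs
  · have hinj := injOn_of_mem_colorfulCliques hU
    obtain ⟨-, rfl, -⟩ := mem_colorfulCliques.1 hU
    rw [← card_transversals_through hinj]
    simp only [mem_singleton]
    exact card_le_card (filter_subset_filter _ (filter_subset _ _))
  · exact le_rfl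

namespace IsCliquePacking

omit [Fintype κ] in
lemma isClique_and_card_of_patternWeight_ne_zero (hg : IsCliquePacking t s (G ⊓ R.comap p) g)
    (hI : patternWeight p g I ≠ 0) : R.IsClique (I : Set κ) ∧ t ≤ #I ∧ #I ≤ s := by
  obtain ⟨K, hK, hgK⟩ := exists_ne_zero_of_sum_ne_zero hI
  obtain rfl := (mem_filter.1 hK).2
  have hcomap : (R.comap p).IsClique (K : Set V) := (hg.isClique hgK).mono inf_le_right
  rw [card_image_of_injOn (injOn_of_isClique_comap hcomap)]
  exact ⟨isClique_image_of_isClique_comap hcomap, hg.le_card hgK, hg.card_le hgK⟩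

lemma sum_patternWeight_le (hg : IsCliquePacking t s (G ⊓ R.comap p) g) (hJ : #J = t) :
    ∑ I with J ⊆ I, patternWeight p g I ≤ #(colorfulCliques G p J) := by
  have hpattern : ∑ I with J ⊆ I, patternWeight p g I = ∑ K with J ⊆ K.image p, g K := by
    simpa only [mul_ite, mul_one, mul_zero, ← sum_filter] using
      sum_patternWeight_mul (p := p) (g := g) fun I => if J ⊆ I then 1 else 0
  refine hpattern.trans_le (hg.sum_le_card (fun T hT => (mem_colorfulCliques.1 hT).1.trans hJ)
    fun K hK hgK => ⟨{v ∈ K | p v ∈ J}, mem_colorfulCliques.2 ?_, filter_subset _ _⟩)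
  have hclique := hg.isClique hgK
  have himage : ({v ∈ K | p v ∈ J} : Finset V).image p = J := by
    rw [← filter_image (p := (· ∈ J)), filter_mem_eq_inter, inter_eq_right.2 (mem_filter.1 hK).2]
  have hinj := (injOn_of_isClique_comap (hclique.mono inf_le_right)).mono
    (coe_subset.2 (filter_subset (fun v => p v ∈ J) K))
  exact ⟨by rw [← card_image_of_injOn hinj, himage], himage,
    (hclique.mono inf_le_left).subset (coe_subset.2 (filter_subset _ _))⟩

lemma sum_spread_mul_card (hg : IsCliquePacking t s (G ⊓ R.comap p) g)
    (h : IsRegularColoring G p R d ε m) (hδ : 0 < cliqueDensity d ε s) (w : ℕ → ℝ) :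
    ∑ K, spread G p g K * w #K = ∑ K, g K * w #K := by
  have haverage (I : Finset κ) : patternWeight p g I *
      ((∑ x ∈ cliqueTransversals G p I, w #(I.image x)) / #(cliqueTransversals G p I)) =
        patternWeight p g I * w #I := by
    by_cases hI : patternWeight p g I = 0
    · rw [hI, zero_mul, zero_mul]
    obtain ⟨hclique, -, hIs⟩ := hg.isClique_and_card_of_patternWeight_ne_zero hI
    have hcard (x : κ → V) (hx : x ∈ cliqueTransversals G p I) : w #(I.image x) = w #I := by
      rw [card_image_of_injective _
        (injective_of_mem_transversals (mem_cliqueTransversals.1 hx).1)]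
    rw [sum_congr rfl hcard, sum_const, nsmul_eq_mul, mul_div_cancel_left₀]
    exact_mod_cast (h.card_cliqueTransversals_pos hIs hclique hδ).ne'
  rw [sum_spread_mul fun K => w #K, sum_congr rfl fun I _ => haverage I,
    sum_patternWeight_mul fun I => w #I]
  refine sum_congr rfl fun K _ => ?_
  by_cases hgK : g K = 0
  · rw [hgK, zero_mul, zero_mul]
  · rw [card_image_of_injOn (injOn_of_isClique_comap ((hg.isClique hgK).mono inf_le_right))]

lemma supersetWeight_spread_le_mul_div (hg : IsCliquePacking t s (G ⊓ R.comap p) g)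
    (h : IsRegularColoring G p R d ε m) (hδ : 0 < cliqueDensity d ε s) (hJ : #J = t)
    {S : Finset κ} (hJS : J ⊆ S) (hU : U ∈ colorfulCliques G p S) :
    supersetWeight (spread G p g) U ≤ #(colorfulCliques G p J) *
      (freeChoices p S / (cliqueDensity d ε s * #(transversals p))) := by
  have hΩ : (0 : ℝ) < #(transversals p) := mod_cast h.card_transversals_pos
  have hpattern (I : Finset κ) : patternWeight p g I *
      (#{x ∈ cliqueTransversals G p I | U ⊆ I.image x} / #(cliqueTransversals G p I)) ≤
        if J ⊆ I then patternWeight p g I *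
          (freeChoices p S / (cliqueDensity d ε s * #(transversals p))) else 0 := by
    by_cases hI : patternWeight p g I = 0
    · simp only [hI, zero_mul, ite_self, le_refl]
    obtain ⟨hclique, -, hIs⟩ := hg.isClique_and_card_of_patternWeight_ne_zero hI
    have hcount := card_filter_subset_image_transversal_le hU I
    by_cases hSI : S ⊆ I
    · rw [if_pos hSI] at hcount
      rw [if_pos (hJS.trans hSI)]
      have hcount : (#{x ∈ cliqueTransversals G p I | U ⊆ I.image x} : ℝ) ≤ freeChoices p S :=
        mod_cast hcount
      gcongr
      · exact patternWeight_nonneg hg.nonneg I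
      · exact h.cliqueDensity_mul_le hIs hclique
    · rw [if_neg hSI, Nat.le_zero] at hcount
      rw [hcount, Nat.cast_zero, zero_div, mul_zero]
      split_ifs
      · exact mul_nonneg (patternWeight_nonneg hg.nonneg I) (by positivity)
      · exact le_rfl
  rw [supersetWeight_spread]
  refine (sum_le_sum fun I _ => hpattern I).trans ?_
  rw [← sum_filter, ← sum_mul]
  exact mul_le_mul_of_nonneg_right (hg.sum_patternWeight_le hJ) (by positivity)

lemma supersetWeight_spread_le (hg : IsCliquePacking t s (G ⊓ R.comap p) g)
    (h : IsRegularColoring G p R d ε m) (hδ : 0 < cliqueDensity d ε s) (hU : #U = t + 1) :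
    supersetWeight (spread G p g) U ≤ 1 / (cliqueDensity d ε s * m) := by
  have hm : (0 : ℝ) < m := mod_cast h.size_pos
  have hΩ : (0 : ℝ) < #(transversals p) := mod_cast h.card_transversals_pos
  by_cases hload : supersetWeight (spread G p g) U = 0
  · rw [hload]; positivity
  have hcolorful := mem_colorfulCliques_of_supersetWeight_spread_ne_zero hload
  set S := U.image p
  have hS : #S = t + 1 := (mem_colorfulCliques.1 hcolorful).1.symm.trans hU
  obtain ⟨i, hi⟩ : S.Nonempty := card_pos.1 (by lia)
  have hcount : #(colorfulCliques G p (S.erase i)) * (freeChoices p S * m) ≤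
      #(transversals p) := calc
    _ ≤ #(colorfulCliques G p (S.erase i)) * freeChoices p (S.erase i) := by
        rw [freeChoices_erase p hi, mul_comm (freeChoices p S)]
        gcongr
        exact h.le_card_colorClass i
    _ = #(cliqueTransversals G p (S.erase i)) := (card_cliqueTransversals G p _).symm
    _ ≤ #(transversals p) := card_le_card (filter_subset _ _)
  refine (hg.supersetWeight_spread_le_mul_div h hδ (by rw [card_erase_of_mem hi, hS]; rfl)
    (erase_subset i S) hcolorful).trans ?_
  rw [← mul_div_assoc, div_le_div_iff₀ (by positivity) (by positivity), one_mul]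
  have hcount : (#(colorfulCliques G p (S.erase i)) : ℝ) * (freeChoices p S * m) ≤
      #(transversals p) := mod_cast hcount
  linear_combination cliqueDensity d ε s * hcount

lemma sum_supersetWeight_spread_le (hg : IsCliquePacking t s (G ⊓ R.comap p) g)
    (h : IsRegularColoring G p R d ε m) (hδ : 0 < cliqueDensity d ε s) (hJ : #J = t)
    {A : Finset (Finset V)} (hA : A ⊆ colorfulCliques G p J) :
    ∑ T ∈ A, supersetWeight (spread G p g) T ≤
      #A + 2 * (s ^ 2 * ε / cliqueDensity d ε s) * #(colorfulCliques G p J) := by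
  have hε := h.error_pos
  set η := 2 * (s ^ 2 * ε / cliqueDensity d ε s)
  set C := colorfulCliques G p J
  have hfree : (freeChoices p J : ℝ) ≠ 0 :=
    mod_cast (prod_pos fun i _ => h.colorClass_pos i).ne'
  have hpattern (I : Finset κ) : patternWeight p g I *
      ((∑ T ∈ A, #{x ∈ cliqueTransversals G p I | T ⊆ I.image x} : ℕ) /
        #(cliqueTransversals G p I)) ≤
          if J ⊆ I then patternWeight p g I * (#A / #C + η) else 0 := by
    by_cases hI : patternWeight p g I = 0
    · simp only [hI, zero_mul, ite_self, le_refl]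
    obtain ⟨hclique, -, hIs⟩ := hg.isClique_and_card_of_patternWeight_ne_zero hI
    rw [sum_card_subset_image_transversal hA]
    split_ifs with hJI
    · have hB : DependsOn (fun x : κ → V => J.image x ∈ A) (J : Set κ) := fun x y hxy => by
        simp only [image_congr fun i hi => hxy i hi]
      refine mul_le_mul_of_nonneg_left ?_ (patternWeight_nonneg hg.nonneg I)
      refine (h.card_filter_cliqueTransversals_div_le hIs hJI hclique hδ hB).trans_eq ?_
      rw [card_filter_image_mem hA, card_cliqueTransversals, Nat.cast_mul, Nat.cast_mul,
        mul_div_mul_right _ _ hfree]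
    · rw [Nat.cast_zero, zero_div, mul_zero]
  calc ∑ T ∈ A, supersetWeight (spread G p g) T
      ≤ (∑ I with J ⊆ I, patternWeight p g I) * (#A / #C + η) := by
        rw [sum_supersetWeight_spread, sum_mul, sum_filter]
        exact sum_le_sum fun I _ => hpattern I
    _ ≤ #C * (#A / #C + η) :=
        mul_le_mul_of_nonneg_right (hg.sum_patternWeight_le hJ) (by positivity)
    _ = #A + η * #C := by
        rw [mul_add, mul_div_cancel_of_imp', mul_comm η]
        exact fun hC => mod_cast Nat.le_zero.1 ((card_le_card hA).trans_eq (mod_cast hC))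

lemma sum_excess_spread_le (hg : IsCliquePacking t s (G ⊓ R.comap p) g)
    (h : IsRegularColoring G p R d ε m) (hδ : 0 < cliqueDensity d ε s) (hJ : #J = t) :
    ∑ T ∈ colorfulCliques G p J, max (supersetWeight (spread G p g) T - 1) 0 ≤
      2 * (s ^ 2 * ε / cliqueDensity d ε s) * #(colorfulCliques G p J) := by
  set A := {T ∈ colorfulCliques G p J | 0 ≤ supersetWeight (spread G p g) T - 1}
  have hexcess : ∑ T ∈ colorfulCliques G p J, max (supersetWeight (spread G p g) T - 1) 0 =
      ∑ T ∈ A, (supersetWeight (spread G p g) T - 1) := by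
    rw [sum_filter]
    exact sum_congr rfl fun T _ => by rw [max_comm, max_def]
  rw [hexcess, sum_sub_distrib, sum_const, nsmul_eq_mul, mul_one, sub_le_iff_le_add']
  exact hg.sum_supersetWeight_spread_le h hδ hJ (filter_subset _ _)

lemma sum_excess_spread_le_pow (hg : IsCliquePacking t s (G ⊓ R.comap p) g)
    (h : IsRegularColoring G p R d ε m) (hδ : 0 < cliqueDensity d ε s) :
    ∑ T ∈ univ.powersetCard t, max (supersetWeight (spread G p g) T - 1) 0 ≤
      2 * (s ^ 2 * ε / cliqueDensity d ε s) * (Fintype.card V : ℝ) ^ t := by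
  have hε := h.error_pos
  set C := (univ.powersetCard t).biUnion (colorfulCliques G p)
  have hdisj : ((univ.powersetCard t : Finset (Finset κ)) : Set (Finset κ)).PairwiseDisjoint
      (colorfulCliques G p) := fun I _ J _ hIJ => disjoint_left.2 fun T hTI hTJ =>
    hIJ ((mem_colorfulCliques.1 hTI).2.1.symm.trans (mem_colorfulCliques.1 hTJ).2.1)
  have hC : C ⊆ univ.powersetCard t := biUnion_subset.2 fun J hJ T hT =>
    mem_powersetCard_univ.2 ((mem_colorfulCliques.1 hT).1.trans (mem_powersetCard_univ.1 hJ))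
  have hcard : (#C : ℝ) ≤ (Fintype.card V : ℝ) ^ t := by
    refine mod_cast (card_le_card hC).trans ?_
    rw [card_powersetCard, card_univ]
    exact Nat.choose_le_pow _ _
  have hzero (T : Finset V) (hT : T ∈ univ.powersetCard t) (hTC : T ∉ C) :
      max (supersetWeight (spread G p g) T - 1) 0 = 0 := by
    have hload : supersetWeight (spread G p g) T = 0 := by
      by_contra hload
      have hcolorful := mem_colorfulCliques_of_supersetWeight_spread_ne_zero hload
      exact hTC (mem_biUnion.2 ⟨T.image p, mem_powersetCard_univ.2
        ((mem_colorfulCliques.1 hcolorful).1.symm.trans (mem_powersetCard_univ.1 hT)), hcolorful⟩)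
    norm_num [hload]
  rw [← sum_subset hC hzero, sum_biUnion hdisj]
  refine (sum_le_sum fun J hJ =>
    hg.sum_excess_spread_le h hδ (mem_powersetCard_univ.1 hJ)).trans ?_
  rw [← mul_sum, ← Nat.cast_sum, ← card_biUnion hdisj]
  gcongr

end IsCliquePacking

end SpreadPacking

open Filter Topology in
lemma exists_cliqueDensity_pos (s : ℕ) {d η : ℝ} (hd : 0 < d) (hη : 0 < η) :
    ∃ ε, 0 < ε ∧ 0 < cliqueDensity d ε s ∧ 2 * (s ^ 2 * ε / cliqueDensity d ε s) ≤ η := by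
  have hdensity : ContinuousAt (fun ε => cliqueDensity d ε s) 0 := by
    unfold cliqueDensity; fun_prop
  have hzero : cliqueDensity d 0 s = d ^ s ^ 2 := by simp [cliqueDensity]
  have hdensity_pos : 0 < cliqueDensity d 0 s := hzero ▸ by positivity
  have hratio : ContinuousAt (fun ε => 2 * (s ^ 2 * ε / cliqueDensity d ε s)) 0 := by
    fun_prop (disch := exact hdensity_pos.ne')
  obtain ⟨ε, hε, hpos, hle⟩ := (eventually_mem_nhdsWithin (a := (0 : ℝ)) (s := Set.Ioi 0)).and
    (nhdsWithin_le_nhds ((hdensity.eventually_const_lt hdensity_pos).and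
      (hratio.eventually_le_const (by simpa using hη)))) |>.exists
  exact ⟨ε, hε, hpos, hle⟩

section TrimmedSpread

variable {V κ : Type*} [Fintype V] [DecidableEq V] [Fintype κ] [DecidableEq κ]
  {G : SimpleGraph V} {p : V → κ} {R : SimpleGraph κ} {g : Finset V → ℝ}
  {d ε : ℝ} {m s t : ℕ}

namespace IsCliquePacking

lemma isClique_and_card_of_spread_ne_zero (hg : IsCliquePacking t s (G ⊓ R.comap p) g)
    {K : Finset V} (hK : spread G p g K ≠ 0) : G.IsClique (K : Set V) ∧ t ≤ #K ∧ #K ≤ s := by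
  obtain ⟨I, x, hI, hx, rfl⟩ := exists_of_spread_ne_zero hK
  rw [mem_cliqueTransversals] at hx
  rw [card_image_of_injective _ (injective_of_mem_transversals hx.1)]
  exact ⟨mod_cast hx.2, (hg.isClique_and_card_of_patternWeight_ne_zero hI).2⟩

lemma exists_trimmed_spread (hg : IsCliquePacking t s (G ⊓ R.comap p) g)
    (h : IsRegularColoring G p R d ε m) (hδ : 0 < cliqueDensity d ε s) :
    ∃ F, IsCliquePacking t s G F ∧
      (∀ U, #U = t + 1 → supersetWeight F U ≤ 1 / (cliqueDensity d ε s * m)) ∧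
      ∀ w : ℕ → ℝ, (∀ i, w i ≤ 1) →
        ∑ K, g K * w #K - 2 * (s ^ 2 * ε / cliqueDensity d ε s) * (Fintype.card V : ℝ) ^ t ≤
          ∑ K, F K * w #K := by
  obtain ⟨F, hF0, hF, hF1, hloss⟩ :=
    exists_le_supersetWeight_le_one t (spread_nonneg (G := G) (p := p) hg.nonneg)
  have hsupp (K : Finset V) (hK : F K ≠ 0) := hg.isClique_and_card_of_spread_ne_zero fun h0 =>
    hK (le_antisymm (h0 ▸ hF K) (hF0 K))
  refine ⟨F, ⟨hF0, fun K hK => (hsupp K hK).1, fun K hK => (hsupp K hK).2.1,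
    fun K hK => (hsupp K hK).2.2, fun T hT => hF1 T hT⟩, fun U hU =>
    (supersetWeight_le_of_le hF U).trans (hg.supersetWeight_spread_le h hδ hU), fun w hw => ?_⟩
  have hexcess := hloss.trans (hg.sum_excess_spread_le_pow h hδ)
  have hweight := sum_mul_sub_sum_sub_le hF fun K => hw #K
  rw [hg.sum_spread_mul_card h hδ] at hweight
  linarith

end IsCliquePacking

end TrimmedSpread

theorem exists_isCliquePacking_supersetWeight_le {t : ℕ} (ht : 2 ≤ t) (s : ℕ) {ε δ : ℝ}
    (hε : 0 < ε) (hδ : 0 < δ) :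
    ∃ n₀ : ℕ, ∀ (V : Type*) [Fintype V] [DecidableEq V], n₀ ≤ Fintype.card V →
      ∀ (G : SimpleGraph V) (g : Finset V → ℝ), IsCliquePacking t s G g →
        ∃ F, IsCliquePacking t s G F ∧ (∀ U, #U = t + 1 → supersetWeight F U ≤ δ) ∧
          ∀ w : ℕ → ℝ, (∀ i, w i ≤ 1) →
            ∑ K, g K * w #K - ε * (Fintype.card V : ℝ) ^ t ≤ ∑ K, F K * w #K := by
  obtain ⟨d, hd, -, hcoloring⟩ := exists_isRegularColoring (half_pos hε)
  obtain ⟨ε', hε', hdensity, hη⟩ := exists_cliqueDensity_pos s hd (half_pos hε)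
  set m : ℕ := ⌈1 / (cliqueDensity d ε' s * δ)⌉₊ + 1 with hm
  obtain ⟨n₀, hn₀⟩ := hcoloring ε' hε' m (Nat.succ_pos _)
  refine ⟨n₀, fun V _ _ hn G g hg => ?_⟩
  obtain ⟨k, p, R, hreg, hpairs⟩ := hn₀ V hn G
  obtain ⟨g', hg', hg'g, hloss⟩ := hg.exists_reduced ht p R
  obtain ⟨F, hF, hcodegree, hweight⟩ := hg'.exists_trimmed_spread hreg hdensity
  refine ⟨F, hF, fun U hU => (hcodegree U hU).trans ?_, fun w hw => ?_⟩
  · have hceil : 1 / (cliqueDensity d ε' s * δ) ≤ m :=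
      (Nat.le_ceil _).trans (by rw [hm]; push_cast; linarith)
    rw [div_le_iff₀ (by positivity)] at hceil ⊢
    linear_combination hceil
  · have hreduced : ∑ K, (g K - g' K) ≤ ε / 2 * (Fintype.card V : ℝ) ^ t := calc
      _ ≤ ε / 2 * (Fintype.card V : ℝ) ^ 2 * (Fintype.card V : ℝ) ^ (t - 2) :=
        hloss.trans (by gcongr)
      _ = ε / 2 * (Fintype.card V : ℝ) ^ t := by
        rw [mul_assoc, ← pow_add, Nat.add_sub_cancel' ht]
    have hexcess := mul_le_mul_of_nonneg_right hη (by positivity : 0 ≤ (Fintype.card V : ℝ) ^ t)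
    have := sum_mul_sub_sum_sub_le hg'g fun K => hw #K
    linarith [hweight w hw]

/-! ### Truncation and rounding -/

section Truncation

variable {V : Type*} [Fintype V] [DecidableEq V] {t s : ℕ} {f : Finset V → ℝ}

/-- The weighting in which every `L` with at least `s` vertices passes its weight on to its
`s`-subsets, uniformly. A `t`-subset of `L` lies in `(#L - t).choose (s - t)` of them, so dividing
by this number preserves the weight above each `t`-set. Sets with fewer than `t` vertices are
dropped. -/
noncomputable def truncate (t s : ℕ) (f : Finset V → ℝ) (K : Finset V) : ℝ :=
  (if #K ∈ Ico t s then f K else 0) +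
    if #K = s then supersetWeight (fun L => f L / (#L - t).choose (s - t)) K else 0

lemma truncate_nonneg (hf : ∀ K, 0 ≤ f K) (K : Finset V) : 0 ≤ truncate t s f K := by
  refine add_nonneg ?_ ?_ <;> split_ifs
  exacts [hf K, le_rfl, supersetWeight_nonneg (fun L => div_nonneg (hf L) (Nat.cast_nonneg _)) K,
    le_rfl]

lemma truncate_le (hf : ∀ K, 0 ≤ f K) {K : Finset V} (hK : #K ≠ s) : truncate t s f K ≤ f K := by
  rw [truncate, if_neg hK, add_zero]
  split_ifs
  exacts [le_rfl, hf K]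

lemma card_mem_Icc_of_truncate_ne_zero (hts : t ≤ s) {K : Finset V} (hK : truncate t s f K ≠ 0) :
    #K ∈ Icc t s := by
  contrapose! hK
  rw [mem_Icc] at hK
  rw [truncate, if_neg (by rw [mem_Ico]; lia), if_neg (by lia), add_zero]

lemma exists_superset_of_truncate_ne_zero {K : Finset V} (hK : truncate t s f K ≠ 0) :
    ∃ L, K ⊆ L ∧ f L ≠ 0 := by
  contrapose! hK
  have hshare : supersetWeight (fun L => f L / (#L - t).choose (s - t)) K = 0 :=
    sum_eq_zero fun L hL => by rw [hK L (mem_filter.1 hL).2, zero_div]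
  rw [truncate, hshare, hK K subset_rfl, ite_self, ite_self, add_zero]

lemma sum_supersetWeight_div_choose {T : Finset V} (hT : #T = t) (hts : t ≤ s) :
    ∑ K with T ⊆ K ∧ #K = s, supersetWeight (fun L => f L / (#L - t).choose (s - t)) K =
      ∑ L with T ⊆ L ∧ s ≤ #L, f L := by
  rw [sum_supersetWeight, sum_filter]
  refine sum_congr rfl fun L _ => ?_
  have hsets : ({K | T ⊆ K ∧ #K = s} : Finset (Finset V)).filter (· ⊆ L) =
      {K ∈ L.powersetCard s | T ⊆ K} := by
    ext K
    simp only [mem_filter, mem_univ, true_and, mem_powersetCard]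
    tauto
  rw [hsets]
  split_ifs with hL
  · have : (#L - t).choose (s - t) ≠ 0 := (Nat.choose_pos (by lia)).ne'
    rw [card_filter_powersetCard_subset _ _ _ hL.1 (hT ▸ hts), hT]
    exact div_mul_cancel₀ _ (mod_cast this)
  · suffices #{K ∈ L.powersetCard s | T ⊆ K} = 0 by rw [this, Nat.cast_zero, mul_zero]
    refine card_eq_zero.2 (filter_eq_empty_iff.2 fun K hK hTK => hL ?_)
    obtain ⟨hKL, hKs⟩ := mem_powersetCard.1 hK
    exact ⟨hTK.trans hKL, hKs ▸ card_le_card hKL⟩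

lemma supersetWeight_truncate {T : Finset V} (hT : #T = t) (hts : t ≤ s) :
    supersetWeight (truncate t s f) T = supersetWeight f T := by
  have hsmall : ({K | T ⊆ K} : Finset (Finset V)).filter (#· ∈ Ico t s) =
      ({K | T ⊆ K} : Finset (Finset V)).filter (¬ s ≤ #·) := by
    ext K
    have := fun hTK : T ⊆ K => card_le_card hTK
    simp only [mem_filter, mem_univ, true_and, mem_Ico]
    grind
  have hlarge := sum_supersetWeight_div_choose (f := f) hT hts
  rw [← filter_filter, ← filter_filter] at hlarge
  rw [supersetWeight, supersetWeight]
  simp only [truncate]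
  rw [sum_add_distrib, ← sum_filter, ← sum_filter, hsmall, hlarge, add_comm,
    sum_filter_add_sum_filter_not]

end Truncation

section Decomposition

variable {V : Type} [Fintype V] [DecidableEq V] {t s : ℕ} {G : SimpleGraph V} {f : Finset V → ℝ}

namespace IsFracDecomp

lemma isCliqueOf (hf : IsFracDecomp t G f) {K : Finset V} (hK : f K ≠ 0) : IsCliqueOf G K :=
  not_imp_comm.1 (hf.2.1 K) hK

lemma truncate (hf : IsFracDecomp t G f) (ht : 1 ≤ t) (hts : t ≤ s) :
    IsFracDecomp t G (truncate t s f) := by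
  refine ⟨truncate_nonneg hf.1, fun K => ?_, fun T hT hTG =>
    (supersetWeight_truncate hT hts).trans (hf.2.2 T hT hTG)⟩
  contrapose
  intro hK
  obtain ⟨L, hKL, hL⟩ := exists_superset_of_truncate_ne_zero hK
  have htK := (mem_Icc.1 (card_mem_Icc_of_truncate_ne_zero hts hK)).1
  exact ⟨card_pos.1 (ht.trans htK), (hf.isCliqueOf hL).2.subset (mod_cast hKL)⟩

lemma isCliquePacking_truncate (hf : IsFracDecomp t G f) (ht : 1 ≤ t) (hts : t ≤ s) :
    IsCliquePacking t s G (_root_.truncate t s f) where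
  nonneg := (hf.truncate ht hts).1
  isClique _ hK := ((hf.truncate ht hts).isCliqueOf hK).2
  le_card _ hK := (mem_Icc.1 (card_mem_Icc_of_truncate_ne_zero hts hK)).1
  card_le _ hK := (mem_Icc.1 (card_mem_Icc_of_truncate_ne_zero hts hK)).2
  supersetWeight_le_one T hT := by
    rw [supersetWeight_truncate hT hts]
    by_cases hTG : G.IsClique (T : Set V)
    · exact (hf.2.2 T hT hTG).le
    · refine (sum_eq_zero fun K hK => hf.2.1 K fun hKG => hTG ?_).trans_le zero_le_one
      exact hKG.2.subset (mod_cast (mem_filter.1 hK).2)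

lemma sum_mul_choose (hf : IsFracDecomp t G f) :
    ∑ K, f K * (#K).choose t = #{T : Finset V | #T = t ∧ G.IsClique (T : Set V)} := by
  have hone (T : Finset V) (hT : T ∈ ({T | #T = t ∧ G.IsClique (T : Set V)} : Finset _)) :
      supersetWeight f T = 1 :=
    hf.2.2 T (mem_filter.1 hT).2.1 (mem_filter.1 hT).2.2
  rw [← nsmul_one, ← sum_const, ← sum_congr rfl hone, sum_supersetWeight]
  refine sum_congr rfl fun K _ => ?_
  by_cases hK : f K = 0
  · simp only [hK, zero_mul]
  congr 2
  rw [← card_powersetCard]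
  congr 1
  ext T
  simp only [mem_powersetCard, mem_filter, mem_univ, true_and]
  have hTG (hTK : T ⊆ K) : G.IsClique (T : Set V) :=
    (hf.isCliqueOf hK).2.subset (mod_cast hTK)
  tauto

lemma sum_mul_choose_le (hf : IsFracDecomp t G f) :
    ∑ K, f K * (#K).choose t ≤ (Fintype.card V : ℝ) ^ t := by
  have : #{T : Finset V | #T = t ∧ G.IsClique (T : Set V)} ≤ (Fintype.card V).choose t := by
    rw [← card_univ, ← card_powersetCard]
    exact card_le_card fun T hT =>
      mem_powersetCard.2 ⟨subset_univ _, (mem_filter.1 hT).2.1⟩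
  rw [hf.sum_mul_choose]
  exact_mod_cast this.trans (Nat.choose_le_pow _ _)

end IsFracDecomp

end Decomposition

section Completion

variable {V : Type} [Fintype V] [DecidableEq V] {t : ℕ} {G : SimpleGraph V}
  {M : Finset (Finset V)}

/-- An integer packing of cliques of `G` with at least `t` vertices: no `t`-set is contained in
two of them. -/
structure IsIntPacking (t : ℕ) (G : SimpleGraph V) (M : Finset (Finset V)) : Prop where
  isClique : ∀ ⦃K⦄, K ∈ M → G.IsClique (K : Set V)
  le_card : ∀ ⦃K⦄, K ∈ M → t ≤ #K
  eq_of_subset : ∀ ⦃T⦄, #T = t → ∀ ⦃K⦄, K ∈ M → ∀ ⦃L⦄, L ∈ M → T ⊆ K → T ⊆ L → K = L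

/-- The `t`-cliques of `G` contained in no member of `M`. -/
noncomputable def uncoveredCliques (t : ℕ) (G : SimpleGraph V) (M : Finset (Finset V)) :
    Finset (Finset V) :=
  {T | (#T = t ∧ G.IsClique (T : Set V)) ∧ ∀ L ∈ M, ¬ T ⊆ L}

lemma mem_uncoveredCliques {T : Finset V} : T ∈ uncoveredCliques t G M ↔
    (#T = t ∧ G.IsClique (T : Set V)) ∧ ∀ L ∈ M, ¬ T ⊆ L := by
  simp [uncoveredCliques]

lemma disjoint_uncoveredCliques : Disjoint M (uncoveredCliques t G M) :=
  disjoint_left.2 fun K hK hKN => (mem_uncoveredCliques.1 hKN).2 K hK subset_rfl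

/-- The indicator of the completion of a packing by single `t`-cliques. -/
noncomputable def completion (t : ℕ) (G : SimpleGraph V) (M : Finset (Finset V)) (K : Finset V) :
    ℝ :=
  if K ∈ M ∪ uncoveredCliques t G M then 1 else 0

lemma sum_completion_mul (φ : Finset V → ℝ) : ∑ K, completion t G M K * φ K =
    ∑ K ∈ M, φ K + ∑ K ∈ uncoveredCliques t G M, φ K := by
  rw [← sum_union disjoint_uncoveredCliques]
  simp only [completion, ite_mul, one_mul, zero_mul, sum_ite_mem, univ_inter]

namespace IsIntPacking

lemma isCliqueOf_of_mem (hM : IsIntPacking t G M) (ht : 1 ≤ t) {K : Finset V}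
    (hK : K ∈ M ∪ uncoveredCliques t G M) : IsCliqueOf G K := by
  rcases mem_union.1 hK with hK | hK
  · exact ⟨card_pos.1 (ht.trans (hM.le_card hK)), hM.isClique hK⟩
  · obtain ⟨⟨hKt, hKG⟩, -⟩ := mem_uncoveredCliques.1 hK
    exact ⟨card_pos.1 (hKt ▸ ht), hKG⟩

lemma existsUnique_superset (hM : IsIntPacking t G M) {T : Finset V} (hT : #T = t)
    (hTG : G.IsClique (T : Set V)) : ∃! K, K ∈ M ∪ uncoveredCliques t G M ∧ T ⊆ K := by
  have heq {K : Finset V} (hK : K ∈ uncoveredCliques t G M) (hTK : T ⊆ K) : T = K :=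
    eq_of_subset_of_card_le hTK (hT ▸ (mem_uncoveredCliques.1 hK).1.1.le)
  by_cases hcov : ∃ K ∈ M, T ⊆ K
  · obtain ⟨K, hK, hTK⟩ := hcov
    refine ⟨K, ⟨mem_union_left _ hK, hTK⟩, fun L ⟨hL, hTL⟩ => ?_⟩
    rcases mem_union.1 hL with hLM | hLN
    · exact hM.eq_of_subset hT hLM hK hTL hTK
    · exact absurd (heq hLN hTL ▸ hTK) ((mem_uncoveredCliques.1 hLN).2 K hK)
  · push Not at hcov
    refine ⟨T, ⟨mem_union_right _ (mem_uncoveredCliques.2 ⟨⟨hT, hTG⟩, hcov⟩), subset_rfl⟩,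
      fun L ⟨hL, hTL⟩ => ?_⟩
    rcases mem_union.1 hL with hLM | hLN
    · exact absurd hTL (hcov L hLM)
    · exact (heq hLN hTL).symm

lemma isIntDecomp_completion (hM : IsIntPacking t G M) (ht : 1 ≤ t) :
    IsIntDecomp t G (completion t G M) := by
  refine ⟨⟨fun K => ?_, fun K hK => if_neg fun hKM => hK (hM.isCliqueOf_of_mem ht hKM),
    fun T hT hTG => ?_⟩, fun K => (ite_eq_or_eq _ _ _).symm⟩
  · rw [completion]
    positivity
  · obtain ⟨K, ⟨hK, hTK⟩, hunique⟩ := hM.existsUnique_superset hT hTG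
    rw [sum_eq_single_of_mem K (mem_filter.2 ⟨mem_univ K, hTK⟩) fun L hL hLK => ?_]
    · exact if_pos hK
    · exact if_neg fun hLM => hLK (hunique L ⟨hLM, (mem_filter.1 hL).2⟩)

/-- A member `K` of the packing pays `c #K` and saves the `(#K).choose t` single `t`-cliques
inside it. -/
lemma cliqueCost_completion (hM : IsIntPacking t G M) (ht : 1 ≤ t) (c : ℕ → ℝ) :
    cliqueCost c (completion t G M) =
      c t * #{T : Finset V | #T = t ∧ G.IsClique (T : Set V)} -
        ∑ K ∈ M, ((#K).choose t * c t - c #K) := by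
  have hcard {K : Finset V} (hK : K ∈ uncoveredCliques t G M) : #K = t :=
    (mem_uncoveredCliques.1 hK).1.1
  have hcost : ∑ K ∈ uncoveredCliques t G M, c #K = #(uncoveredCliques t G M) * c t := by
    rw [sum_congr rfl fun K hK => by rw [hcard hK], sum_const, nsmul_eq_mul]
  have hchoose : ∑ K ∈ uncoveredCliques t G M, ((#K).choose t : ℝ) =
      #(uncoveredCliques t G M) := by
    rw [sum_congr rfl fun K hK => by rw [hcard hK, Nat.choose_self], Nat.cast_one, sum_const,
      nsmul_one]
  simp only [cliqueCost, mul_comm (c _) (completion t G M _)]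
  rw [← (hM.isIntDecomp_completion ht).1.sum_mul_choose, sum_completion_mul, sum_completion_mul,
    hcost, hchoose, sum_sub_distrib, ← sum_mul]
  ring

end IsIntPacking

omit [Fintype V] [DecidableEq V] in
lemma isIntPacking_empty : IsIntPacking t G ∅ := ⟨by simp, by simp, by simp⟩

end Completion

section CliqueHypergraph

variable {V : Type*} [Fintype V] [DecidableEq V] {t s : ℕ} {G : SimpleGraph V}
  {F : Finset V → ℝ}

namespace IsCliquePacking

lemma sum_subtype_filter (hF : IsCliquePacking t s G F) (P : Finset V → Prop) [DecidablePred P]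
    (φ : Finset V → ℝ) :
    ∑ K : {K : Finset V // t ≤ #K ∧ #K ≤ s} with P K.1, F K.1 * φ K.1 =
      ∑ K with P K, F K * φ K := by
  rw [sum_filter, sum_filter, ← sum_subtype (p := fun K => t ≤ #K ∧ #K ≤ s)
    {K : Finset V | t ≤ #K ∧ #K ≤ s} (by simp) (fun K => if P K then F K * φ K else 0)]
  refine sum_subset (subset_univ _) fun K _ hK => ?_
  have : F K = 0 := by
    contrapose! hK
    exact mem_filter.2 ⟨mem_univ _, hF.le_card hK, hF.card_le hK⟩
  rw [this, zero_mul, ite_self]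

lemma isSparseFracMatching (hF : IsCliquePacking t s G F) {δ : ℝ}
    (hδ : ∀ U, #U = t + 1 → supersetWeight F U ≤ δ) :
    IsSparseFracMatching (s.choose t) δ
      (fun K : {K : Finset V // t ≤ #K ∧ #K ≤ s} => tSubsets t K.1) (fun K => F K.1) where
  nonneg K := hF.nonneg K
  nonempty K := by
    obtain ⟨T, hTK, hT⟩ := exists_subset_card_eq K.2.1
    exact ⟨⟨T, hT⟩, mem_tSubsets.2 hTK⟩
  card_le K := (card_tSubsets t K.1).trans_le (Nat.choose_le_choose t K.2.2)
  load_le_one T := by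
    have := hF.sum_subtype_filter (fun K => T.1 ⊆ K) 1
    simp only [Pi.one_apply, mul_one] at this
    simp only [vertexLoad, mem_tSubsets]
    exact this.trans_le (hF.supersetWeight_le_one T.2)
  codegree_le T T' hTT' := by
    have := hF.sum_subtype_filter (fun K => T.1 ⊆ K ∧ T'.1 ⊆ K) 1
    simp only [Pi.one_apply, mul_one, ← union_subset_iff] at this
    simp only [codegree, mem_tSubsets, ← union_subset_iff]
    have hlt : t < #(T.1 ∪ T'.1) := by
      refine lt_of_le_of_ne (T.2.symm.trans_le (card_le_card subset_union_left)) fun heq => hTT' ?_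
      have hT := eq_of_subset_of_card_le subset_union_left (heq.symm.trans T.2.symm).le
      have hT' := eq_of_subset_of_card_le subset_union_right (heq.symm.trans T'.2.symm).le
      exact Subtype.ext (hT.trans hT'.symm)
    obtain ⟨U, hU, hUt⟩ := exists_subset_card_eq hlt
    exact this.trans_le ((supersetWeight_anti hF.nonneg hU).trans (hδ U hUt))

end IsCliquePacking

end CliqueHypergraph

theorem IsCliquePacking.exists_isIntPacking {t : ℕ} (ht : 2 ≤ t) (s : ℕ) {ε : ℝ} (hε : 0 < ε) :
    ∃ n₀ : ℕ, ∀ (V : Type) [Fintype V] [DecidableEq V], n₀ ≤ Fintype.card V →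
      ∀ (G : SimpleGraph V) (g : Finset V → ℝ), IsCliquePacking t s G g →
      ∀ w : ℕ → ℝ, (∀ i, w i ∈ Set.Icc 0 1) → ∃ M, IsIntPacking t G M ∧ (∀ K ∈ M, #K ≤ s) ∧
        ∑ K, g K * w #K - ε * (Fintype.card V : ℝ) ^ t ≤ ∑ K ∈ M, w #K := by
  obtain ⟨δ, hδ, hround⟩ := exists_matching_of_isSparseFracMatching (s.choose t) (half_pos hε)
  obtain ⟨n₀, hspread⟩ := exists_isCliquePacking_supersetWeight_le ht s (half_pos hε) hδ
  refine ⟨n₀, fun V _ _ hV G g hg w hw => ?_⟩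
  obtain ⟨F, hF, hFδ, hgF⟩ := hspread V hV G g hg
  obtain ⟨M, hMF, hMdisj, hFM⟩ := hround _ _ _ _ (fun K => w #K.1)
    (hF.isSparseFracMatching hFδ) fun K => hw _
  have hcard : (Fintype.card {T : Finset V // #T = t} : ℝ) ≤ (Fintype.card V : ℝ) ^ t := by
    rw [Fintype.card_finset_len]
    exact_mod_cast Nat.choose_le_pow _ _
  have hsum := hF.sum_subtype_filter (fun _ => True) (fun K => w #K)
  simp only [filter_true] at hsum
  refine ⟨M.map (Function.Embedding.subtype _), ⟨fun K hK => ?_, fun K hK => ?_,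
    fun T hT K hK L hL hTK hTL => ?_⟩, fun K hK => ?_, ?_⟩
  · obtain ⟨K, hKM, rfl⟩ := mem_map.1 hK
    exact hF.isClique (hMF K hKM)
  · obtain ⟨K, -, rfl⟩ := mem_map.1 hK
    exact K.2.1
  · obtain ⟨K, hKM, rfl⟩ := mem_map.1 hK
    obtain ⟨L, hLM, rfl⟩ := mem_map.1 hL
    by_contra hKL
    have := hMdisj hKM hLM fun h => hKL (congrArg Subtype.val h)
    exact disjoint_left.1 this (mem_tSubsets (T := ⟨T, hT⟩).2 hTK) (mem_tSubsets.2 hTL)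
  · obtain ⟨K, -, rfl⟩ := mem_map.1 hK
    exact K.2.2
  · rw [sum_map]
    rw [hsum] at hFM
    have hbudget := mul_le_mul_of_nonneg_left hcard (half_pos hε).le
    have := hgF w fun i => (hw i).2
    exact le_trans (by linarith) hFM

section Cost

lemma succ_le_choose_add {t : ℕ} (ht : 1 ≤ t) (q : ℕ) : q + 1 ≤ (q + t).choose t := by
  rw [← Nat.choose_symm_add]
  calc q + 1 = (q + 1).choose q := (Nat.choose_succ_self_right q).symm
    _ ≤ (q + t).choose q := Nat.choose_le_choose q (by lia)

lemma mul_le_two_mul_choose_add {t : ℕ} (ht : 2 ≤ t) (q : ℕ) :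
    (q + 2) * (q + 1) ≤ 2 * (q + t).choose t :=
  calc (q + 2) * (q + 1) = 2 * (q + 2).choose 2 := by
        rw [Nat.choose_two_right, Nat.mul_div_cancel' (Nat.even_mul_pred_self _).two_dvd]
        rfl
    _ = 2 * (q + 2).choose q := by rw [Nat.choose_symm_add]
    _ ≤ 2 * (q + t).choose q := by gcongr
    _ = 2 * (q + t).choose t := by rw [Nat.choose_symm_add]

variable {t : ℕ} {c : ℕ → ℝ}

lemma le_succ_mul_of_step_le (hstep : ∀ i, t ≤ i → c (i + 1) - c i ≤ c t) (q : ℕ) :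
    c (q + t) ≤ (q + 1) * c t := by
  induction q with
  | zero => simp
  | succ q ih =>
    have := hstep (q + t) (by lia)
    rw [add_right_comm]
    push_cast
    linarith

lemma le_choose_mul_of_step_le (ht : 1 ≤ t) (hct : 0 ≤ c t)
    (hstep : ∀ i, t ≤ i → c (i + 1) - c i ≤ c t) {k : ℕ} (hk : t ≤ k) :
    c k ≤ k.choose t * c t := by
  obtain ⟨q, rfl⟩ := Nat.exists_eq_add_of_le' hk
  refine (le_succ_mul_of_step_le hstep q).trans (mul_le_mul_of_nonneg_right ?_ hct)
  exact_mod_cast succ_le_choose_add ht q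

-- Along `s = q + t` the cost grows linearly in `q`, but `s.choose t` at least quadratically.
lemma exists_cost_le_mul_choose (ht : 2 ≤ t) (hstep : ∀ i, t ≤ i → c (i + 1) - c i ≤ c t)
    {ρ : ℝ} (hρ : 0 < ρ) : ∃ s, t ≤ s ∧ c s ≤ ρ * s.choose t := by
  obtain ⟨q, hq⟩ := exists_nat_ge (2 * c t / ρ)
  have hchoose : ((q + 2) * (q + 1) : ℝ) ≤ 2 * (q + t).choose t :=
    mod_cast mul_le_two_mul_choose_add ht q
  refine ⟨q + t, by lia, ?_⟩
  calc c (q + t) ≤ (q + 1) * c t := le_succ_mul_of_step_le hstep q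
    _ ≤ (q + 1) * (ρ * (q + 2) / 2) := by
        have : 2 * c t ≤ q * ρ := (div_le_iff₀ hρ).1 hq
        gcongr
        linarith
    _ = ρ * ((q + 2) * (q + 1) / 2) := by ring
    _ ≤ ρ * (q + t).choose t := by
        gcongr
        linarith

/-- The saving `C(k, t) c_t - c_k` of a `k`-clique over the single `t`-cliques inside it, as a
fraction of the largest value `C(s, t) c_t` it could have for `k ≤ s`, and `0` unless
`t ≤ k ≤ s`. -/
noncomputable def relativeSaving (t s : ℕ) (c : ℕ → ℝ) (k : ℕ) : ℝ :=
  if k ∈ Icc t s then (k.choose t * c t - c k) / (s.choose t * c t) else 0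

lemma choose_mul_pos {s : ℕ} (hts : t ≤ s) (hct : 0 < c t) : 0 < s.choose t * c t :=
  mul_pos (mod_cast Nat.choose_pos hts) hct

lemma relativeSaving_mem_Icc (ht : 1 ≤ t) (hct : 0 < c t) (hc : ∀ i, 1 ≤ i → 0 ≤ c i)
    (hstep : ∀ i, t ≤ i → c (i + 1) - c i ≤ c t) (s k : ℕ) :
    relativeSaving t s c k ∈ Set.Icc 0 1 := by
  rw [relativeSaving]
  split_ifs with hk
  · obtain ⟨htk, hks⟩ := mem_Icc.1 hk
    have hpos := choose_mul_pos (htk.trans hks) hct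
    have hsaving := le_choose_mul_of_step_le ht hct.le hstep htk
    have hck := hc k (ht.trans htk)
    have hchoose : (k.choose t * c t : ℝ) ≤ s.choose t * c t := by gcongr
    exact ⟨div_nonneg (by linarith) hpos.le, (div_le_one hpos).2 (by linarith)⟩
  · exact ⟨le_rfl, zero_le_one⟩

lemma choose_mul_relativeSaving {s k : ℕ} (hct : 0 < c t) (htk : t ≤ k) (hks : k ≤ s) :
    s.choose t * c t * relativeSaving t s c k = k.choose t * c t - c k := by
  rw [relativeSaving, if_pos (mem_Icc.2 ⟨htk, hks⟩)]
  exact mul_div_cancel₀ _ (choose_mul_pos (htk.trans hks) hct).ne'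

end Cost

section IntegralityGap

variable {V : Type} [Fintype V] [DecidableEq V] {t s : ℕ} {G : SimpleGraph V}
  {c : ℕ → ℝ} {f : Finset V → ℝ}

namespace IsFracDecomp

lemma cost_mul_nonneg (hf : IsFracDecomp t G f) (hc : ∀ i, 1 ≤ i → 0 ≤ c i) (K : Finset V) :
    0 ≤ c #K * f K := by
  by_cases hK : f K = 0
  · rw [hK, mul_zero]
  · exact mul_nonneg (hc _ (hf.isCliqueOf hK).1.card_pos) (hf.1 K)

lemma cliqueCost_nonneg (hf : IsFracDecomp t G f) (hc : ∀ i, 1 ≤ i → 0 ≤ c i) :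
    0 ≤ cliqueCost c f :=
  sum_nonneg fun K _ => hf.cost_mul_nonneg hc K

lemma cliqueCost_truncate_le (hf : IsFracDecomp t G f) (hc : ∀ i, 1 ≤ i → 0 ≤ c i) (ht : 1 ≤ t)
    (hts : t ≤ s) {ρ : ℝ} (hρ : 0 ≤ ρ) (hcs : c s ≤ ρ * s.choose t) :
    cliqueCost c (_root_.truncate t s f) ≤ cliqueCost c f + ρ * (Fintype.card V : ℝ) ^ t := by
  set g := _root_.truncate t s f
  have hg : IsFracDecomp t G g := hf.truncate ht hts
  have hterm (K : Finset V) : c #K * g K ≤ c #K * f K + ρ * (g K * (#K).choose t) := by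
    have hnew : 0 ≤ ρ * (g K * (#K).choose t) :=
      mul_nonneg hρ (mul_nonneg (hg.1 K) (Nat.cast_nonneg _))
    by_cases hgK : g K = 0
    · rw [hgK, mul_zero, zero_mul, mul_zero, add_zero]
      exact hf.cost_mul_nonneg hc K
    by_cases hKs : #K = s
    · have := mul_le_mul_of_nonneg_right (hKs ▸ hcs) (hg.1 K)
      have := hf.cost_mul_nonneg hc K
      linarith
    · have := mul_le_mul_of_nonneg_left (truncate_le (t := t) hf.1 hKs)
        (hc _ (hg.isCliqueOf hgK).1.card_pos)
      exact le_add_of_le_of_nonneg this hnew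
  calc cliqueCost c g ≤ ∑ K, (c #K * f K + ρ * (g K * (#K).choose t)) :=
        sum_le_sum fun K _ => hterm K
    _ = cliqueCost c f + ρ * ∑ K, g K * (#K).choose t := by
        rw [sum_add_distrib, ← mul_sum, cliqueCost]
    _ ≤ cliqueCost c f + ρ * (Fintype.card V : ℝ) ^ t := by
        gcongr
        exact hg.sum_mul_choose_le

lemma choose_mul_sum_mul_relativeSaving (hf : IsFracDecomp t G f) (hfs : IsCliquePacking t s G f)
    (hct : 0 < c t) :
    s.choose t * c t * ∑ K, f K * relativeSaving t s c #K =
      c t * #{T : Finset V | #T = t ∧ G.IsClique (T : Set V)} - cliqueCost c f := by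
  rw [← hf.sum_mul_choose, cliqueCost, mul_sum, mul_sum, ← sum_sub_distrib]
  refine sum_congr rfl fun K _ => ?_
  by_cases hK : f K = 0
  · simp only [hK, mul_zero, zero_mul, sub_zero]
  · linear_combination f K * choose_mul_relativeSaving hct (hfs.le_card hK) (hfs.card_le hK)

end IsFracDecomp

lemma piFrac_nonneg (hc : ∀ i, 1 ≤ i → 0 ≤ c i) : 0 ≤ piFrac t G c :=
  Real.sInf_nonneg fun _ ⟨_, hf, hx⟩ => hx ▸ hf.cliqueCost_nonneg hc

lemma le_piFrac (ht : 1 ≤ t) {x : ℝ} (h : ∀ f, IsFracDecomp t G f → x ≤ cliqueCost c f) :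
    x ≤ piFrac t G c :=
  le_csInf ⟨_, _, (isIntPacking_empty.isIntDecomp_completion ht).1, rfl⟩
    fun _ ⟨f, hf, hy⟩ => hy ▸ h f hf

lemma IsIntDecomp.piInt_le {h : Finset V → ℝ} (hh : IsIntDecomp t G h)
    (hc : ∀ i, 1 ≤ i → 0 ≤ c i) : piInt t G c ≤ cliqueCost c h :=
  csInf_le ⟨0, fun _ ⟨_, hf, hx⟩ => hx ▸ hf.1.cliqueCost_nonneg hc⟩ ⟨h, hh, rfl⟩

end IntegralityGap

theorem IsFracDecomp.exists_isIntDecomp_cliqueCost_le {t : ℕ} (ht : 2 ≤ t) {c : ℕ → ℝ}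
    (hc : ∀ i, 1 ≤ i → 0 ≤ c i) (hct : 0 < c t) (hstep : ∀ i, t ≤ i → c (i + 1) - c i ≤ c t)
    {s : ℕ} (hts : t ≤ s) {ρ : ℝ} (hρ : 0 < ρ) :
    ∃ n₀ : ℕ, ∀ (V : Type) [Fintype V] [DecidableEq V], n₀ ≤ Fintype.card V →
      ∀ (G : SimpleGraph V) (g : Finset V → ℝ), IsFracDecomp t G g → IsCliquePacking t s G g →
      ∃ h, IsIntDecomp t G h ∧
        cliqueCost c h ≤ cliqueCost c g + ρ * (Fintype.card V : ℝ) ^ t := by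
  have ht' : 1 ≤ t := one_le_two.trans ht
  set W : ℝ := s.choose t * c t
  have hW : 0 < W := choose_mul_pos hts hct
  obtain ⟨n₀, hround⟩ := IsCliquePacking.exists_isIntPacking ht s (div_pos hρ hW)
  refine ⟨n₀, fun V _ _ hV G g hg hgs => ?_⟩
  obtain ⟨M, hM, hMs, hsaving⟩ := hround V hV G g hgs (relativeSaving t s c)
    (relativeSaving_mem_Icc ht' hct hc hstep s)
  refine ⟨_, hM.isIntDecomp_completion ht', ?_⟩
  have hsavingM : W * ∑ K ∈ M, relativeSaving t s c #K =
      ∑ K ∈ M, ((#K).choose t * c t - c #K) := by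
    rw [mul_sum]
    exact sum_congr rfl fun K hK => choose_mul_relativeSaving hct (hM.le_card hK) (hMs K hK)
  have hsavingg := hg.choose_mul_sum_mul_relativeSaving hgs hct
  have hcompare := mul_le_mul_of_nonneg_left hsaving hW.le
  rw [mul_sub, ← mul_assoc, mul_div_cancel₀ _ hW.ne', hsavingM, hsavingg] at hcompare
  rw [hM.cliqueCost_completion ht']
  linarith

theorem stmt7_general {t : ℕ} (ht : 2 ≤ t) {c : ℕ → ℝ} (hc : ∀ i, 1 ≤ i → 0 ≤ c i)
    (hstep : ∀ i, t ≤ i → c (i + 1) - c i ≤ c t) {ρ : ℝ} (hρ : 0 < ρ) :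
    ∃ n₀ : ℕ, ∀ (V : Type) [Fintype V] [DecidableEq V] (G : SimpleGraph V),
      n₀ < Fintype.card V → piInt t G c ≤ piFrac t G c + ρ * (Fintype.card V : ℝ) ^ t := by
  have ht' : 1 ≤ t := one_le_two.trans ht
  rcases (hc t ht').eq_or_lt with hct | hct
  · refine ⟨0, fun V _ _ G _ => ?_⟩
    have hfree : cliqueCost c (completion t G ∅) = 0 := by
      rw [isIntPacking_empty.cliqueCost_completion ht', ← hct, zero_mul, sum_empty, sub_zero]
    calc piInt t G c ≤ 0 := hfree ▸ (isIntPacking_empty.isIntDecomp_completion ht').piInt_le hc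
      _ ≤ piFrac t G c + ρ * (Fintype.card V : ℝ) ^ t :=
          add_nonneg (piFrac_nonneg hc) (by positivity)
  obtain ⟨s, hts, hcs⟩ := exists_cost_le_mul_choose ht hstep (half_pos hρ)
  obtain ⟨n₀, hround⟩ := IsFracDecomp.exists_isIntDecomp_cliqueCost_le ht hc hct hstep hts
    (half_pos hρ)
  refine ⟨n₀, fun V _ _ G hV => sub_le_iff_le_add.1 (le_piFrac ht' fun f hf => ?_)⟩
  obtain ⟨h, hh, hcost⟩ :=
    hround V hV.le G _ (hf.truncate ht' hts) (hf.isCliquePacking_truncate ht' hts)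
  have := hf.cliqueCost_truncate_le hc ht' hts (half_pos hρ).le hcs
  have := hh.piInt_le hc
  linarith

/-- Theorem 1.10: the additive integrality gap for `t`-clique decompositions is
`o(nᵗ)`: if `c_i ≥ 1` and `c_{i+1} - c_i ≤ c_t` for all `i ≥ t`, then for every
`ρ > 0` and all sufficiently large `n`, `π_t(G,c) ≤ π*_t(G,c) + ρ nᵗ`. -/
theorem stmt7 (t : ℕ) (ht : 2 ≤ t) (c : ℕ → ℝ) (hc : ∀ i, 1 ≤ i → 0 ≤ c i)
    (hc1 : ∀ i, t ≤ i → 1 ≤ c i) (hstep : ∀ i, t ≤ i → c (i + 1) - c i ≤ c t) :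
    ∀ ρ : ℝ, 0 < ρ → ∃ n₀ : ℕ, ∀ n : ℕ, n₀ < n → ∀ G : SimpleGraph (Fin n),
      piInt t G c ≤ piFrac t G c + ρ * (n : ℝ) ^ t := by
  intro ρ hρ
  obtain ⟨n₀, hgap⟩ := stmt7_general ht hc hstep hρ
  exact ⟨n₀, fun n hn G => by simpa only [Fintype.card_fin] using hgap (Fin n) G (by simpa)⟩
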